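/- arXiv:1101.1717 — 3 statements merged into one kernel-verified Lean document; each statement's English description precedes it below -/
import Mathlib

section
/- For every tripartite density matrix ρ on ℂ^m⊗ℂ^n⊗ℂ^p (indexed by Fin m × (Fin n × Fin p)) and every POVM {P_j} on ℂ^m, the von Neumann Holevo quantities satisfy χ(P, b) ≤ χ(P, bc), where p_j = Tr((P_j ⊗ I) ρ), ρ_{bc|j} = (1/p_j)·Tr_a((P_j ⊗ I) ρ) for p_j ≠ 0, ρ_{b|j} = Tr_c(ρ_{bc|j}), χ(P, bc) = S(Tr_a ρ) − ∑_{j : p_j ≠ 0} p_j S(ρ_{bc|j}), and χ(P, b) = S(Tr_c(Tr_a ρ)) − ∑_{j : p_j ≠ 0} p_j S(ρ_{b|j}). -/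
open scoped Kronecker
open Finset Matrix
open scoped ComplexOrder

noncomputable section

/-- A density matrix: positive semidefinite with unit trace. -/
def IsDensity {d : Type} [Fintype d] [DecidableEq d] (ρ : Matrix d d ℂ) : Prop :=
  ρ.PosSemidef ∧ ρ.trace = 1

/-- An entropy family: a real number assigned to every square complex matrix of
every finite dimension. -/
def EntropyFamily : Type 1 :=
  ∀ (d : Type) [Fintype d] [DecidableEq d], Matrix d d ℂ → ℝ

/-- Concavity of an entropy family. -/
def EntropyFamily.Concave (S : EntropyFamily) : Prop :=
  ∀ (d : Type) [Fintype d] [DecidableEq d] (k : ℕ) (p : Fin k → ℝ)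
    (ρ : Fin k → Matrix d d ℂ),
    (∀ j, 0 ≤ p j) → ∑ j, p j = 1 → (∀ j, IsDensity (ρ j)) →
    ∑ j, p j * S d (ρ j) ≤ S d (∑ j, (p j : ℂ) • ρ j)

/-- The entropy family depends only on the nonzero spectrum: `S (A Aᴴ) = S (Aᴴ A)`. -/
def EntropyFamily.SpectrumDep (S : EntropyFamily) : Prop :=
  ∀ (d e : Type) [Fintype d] [DecidableEq d] [Fintype e] [DecidableEq e]
    (A : Matrix d e ℂ), S d (A * Aᴴ) = S e (Aᴴ * A)

/-- Partial trace over the first tensor factor. -/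
def trA {da db : Type} [Fintype da] (ρ : Matrix (da × db) (da × db) ℂ) :
    Matrix db db ℂ :=
  Matrix.of fun j j' => ∑ i, ρ (i, j) (i, j')

/-- Partial trace over the second tensor factor. -/
def trB {da db : Type} [Fintype db] (ρ : Matrix (da × db) (da × db) ℂ) :
    Matrix da da ℂ :=
  Matrix.of fun i i' => ∑ j, ρ (i, j) (i', j)

/-- A POVM: a finite family of positive semidefinite matrices summing to `1`. -/
def IsPOVM {d : Type} [Fintype d] [DecidableEq d] {k : ℕ}
    (P : Fin k → Matrix d d ℂ) : Prop :=
  (∀ j, (P j).PosSemidef) ∧ ∑ j, P j = 1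

/-- Probability of POVM outcome `P` on the first factor: `Tr((P ⊗ I) ρ)`. -/
def prob {da db : Type} [Fintype da] [Fintype db] [DecidableEq da] [DecidableEq db]
    (P : Matrix da da ℂ) (ρ : Matrix (da × db) (da × db) ℂ) : ℝ :=
  (((P ⊗ₖ (1 : Matrix db db ℂ)) * ρ).trace).re

/-- Conditional state on the second factor given POVM outcome `P`. -/
def condB {da db : Type} [Fintype da] [Fintype db] [DecidableEq da] [DecidableEq db]
    (P : Matrix da da ℂ) (ρ : Matrix (da × db) (da × db) ℂ) : Matrix db db ℂ :=
  (((prob P ρ)⁻¹ : ℝ) : ℂ) • trA ((P ⊗ₖ (1 : Matrix db db ℂ)) * ρ)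

/-- The Holevo quantity `χ(P, b)`. -/
def holevoB (S : EntropyFamily) {da db : Type} [Fintype da] [DecidableEq da]
    [Fintype db] [DecidableEq db] {k : ℕ} (P : Fin k → Matrix da da ℂ)
    (ρ : Matrix (da × db) (da × db) ℂ) : ℝ :=
  S db (trA ρ) -
    ∑ j ∈ univ.filter (fun j => prob (P j) ρ ≠ 0),
      prob (P j) ρ * S db (condB (P j) ρ)

/-- Eigenvalues of a Hermitian matrix (junk value `0` if not Hermitian). -/
def eigs {d : Type} [Fintype d] [DecidableEq d] (X : Matrix d d ℂ) : d → ℝ :=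
  if h : X.IsHermitian then h.eigenvalues else 0

/-- von Neumann entropy `S(ρ) = ∑ᵢ (−λᵢ log λᵢ)`. -/
def vN {d : Type} [Fintype d] [DecidableEq d] (ρ : Matrix d d ℂ) : ℝ :=
  ∑ i, Real.negMulLog (eigs ρ i)

/-- von Neumann entropy as an entropy family. -/
def vNF : EntropyFamily := fun d _ _ ρ => vN ρ

/-- Quadratic entropy `S_Q(ρ) = 1 − Re Tr(ρ²)`. -/
def SQ {d : Type} [Fintype d] (ρ : Matrix d d ℂ) : ℝ := 1 - ((ρ * ρ).trace).re

/-- Quadratic entropy as an entropy family. -/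
def SQF : EntropyFamily := fun d _ _ ρ => SQ ρ

/-- The outer product `ψ ψᴴ`. -/
def outer {d : Type} (ψ : d → ℂ) : Matrix d d ℂ := Matrix.vecMulVec ψ (star ψ)

/-- A unit vector. -/
def UnitVec {d : Type} [Fintype d] (ψ : d → ℂ) : Prop := ∑ i, ‖ψ i‖ ^ 2 = 1

/-- Kraus operators of a quantum channel: `∑ᵢ Kᵢᴴ Kᵢ = 1`. -/
def IsKraus {n r t : ℕ} (K : Fin t → Matrix (Fin r) (Fin n) ℂ) : Prop :=
  ∑ i, (K i)ᴴ * K i = 1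

/-- Action of the quantum channel with Kraus operators `K`. -/
def channel {n r t : ℕ} (K : Fin t → Matrix (Fin r) (Fin n) ℂ)
    (ρ : Matrix (Fin n) (Fin n) ℂ) : Matrix (Fin r) (Fin r) ℂ :=
  ∑ i, K i * ρ * (K i)ᴴ

/-- Conditional joint state after a POVM element with square root `Q` and
outcome probability `p`: `(1/p) (Q ⊗ I) ρ (Q ⊗ I)`. -/
def condJoint {da db : Type} [Fintype da] [Fintype db] [DecidableEq da]
    [DecidableEq db] (Q : Matrix da da ℂ) (p : ℝ)
    (ρ : Matrix (da × db) (da × db) ℂ) : Matrix (da × db) (da × db) ℂ :=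
  ((p⁻¹ : ℝ) : ℂ) • ((Q ⊗ₖ (1 : Matrix db db ℂ)) * ρ * (Q ⊗ₖ (1 : Matrix db db ℂ)))

/-- Tsallis entropy with parameter `q`. -/
def tsallis (q : ℝ) {d : Type} [Fintype d] [DecidableEq d]
    (ρ : Matrix d d ℂ) : ℝ :=
  ((∑ i, eigs ρ i ^ q) - 1) / (1 - q)

/-- Rényi entropy with parameter `q`. -/
def renyi (q : ℝ) {d : Type} [Fintype d] [DecidableEq d]
    (ρ : Matrix d d ℂ) : ℝ :=
  (1 / (1 - q)) * Real.log (∑ i, eigs ρ i ^ q)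


/-- A primitive, in `t`, of `(1 - t) (r - s)² / ((1 - t) s + t r)`; its increment over `[0, 1]` is
`r log r - r log s - r + s`. -/
def relEntPrimitive (r s t : ℝ) : ℝ := r * Real.log (s + t * (r - s)) - (r - s) * t

lemma hasDerivAt_relEntPrimitive {r s t : ℝ} (hr : 0 ≤ r) (hs : 0 ≤ s) (ht : t ∈ Set.Ioo 0 1) :
    HasDerivAt (relEntPrimitive r s) ((1 - t) * ((r - s) ^ 2 / ((1 - t) * s + t * r))) t := by
  obtain ⟨h0, h1⟩ := ht
  by_cases h : r = 0 ∧ s = 0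
  · obtain ⟨rfl, rfl⟩ := h
    have : relEntPrimitive 0 0 = fun _ => 0 := by
      funext t
      simp [relEntPrimitive]
    simpa [this] using hasDerivAt_const t (0 : ℝ)
  have hu : 0 < s + t * (r - s) := by
    rcases hr.eq_or_lt with rfl | hr'
    · have : 0 < s := lt_of_le_of_ne hs (by tauto)
      nlinarith
    · nlinarith [mul_pos h0 hr', mul_nonneg (sub_nonneg.2 h1.le) hs]
  have hd : HasDerivAt (fun t => s + t * (r - s)) (r - s) t := by
    simpa using ((hasDerivAt_id t).mul_const (r - s)).const_add s
  refine (((hd.log hu.ne').const_mul r).sub ((hasDerivAt_id t).const_mul (r - s))).congr_deriv ?_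
  rw [show (1 - t) * s + t * r = s + t * (r - s) by ring]
  change r * ((r - s) / (s + t * (r - s))) - (r - s) * 1 = _
  obtain ⟨u, hut⟩ : ∃ u, u = s + t * (r - s) := ⟨_, rfl⟩
  rw [← hut] at hu ⊢
  field_simp
  rw [hut]
  ring

lemma continuousOn_relEntPrimitive {r s : ℝ} (hr : 0 ≤ r) (hs : 0 ≤ s) (h : s = 0 → r = 0) :
    ContinuousOn (relEntPrimitive r s) (Set.Icc 0 1) := by
  unfold relEntPrimitive
  rcases hr.eq_or_lt with rfl | hr'
  · simp only [zero_mul]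
    fun_prop
  have hs' : 0 < s := lt_of_le_of_ne hs fun h0 => hr'.ne' (h h0.symm)
  refine ContinuousOn.sub (ContinuousOn.mul continuousOn_const (ContinuousOn.log (by fun_prop) ?_))
    (by fun_prop)
  rintro t ⟨h0, h1⟩
  have : 0 < s + t * (r - s) := by
    rcases h0.eq_or_lt with rfl | h0'
    · simpa
    · nlinarith [mul_pos h0' hr', mul_nonneg (sub_nonneg.2 h1) hs]
  exact this.ne'

/-- `X` is unitarily diagonalized by `U` with nonnegative eigenvalues `r`. -/
structure IsSpectralDecomp {d : Type} [Fintype d] [DecidableEq d] (X U : Matrix d d ℂ)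
    (r : d → ℝ) : Prop where
  isometry : Uᴴ * U = 1
  coisometry : U * Uᴴ = 1
  eq : X = U * diagonal (fun i => (r i : ℂ)) * Uᴴ
  nonneg : ∀ i, 0 ≤ r i

section

variable {d : Type} [Fintype d] [DecidableEq d]

lemma Matrix.PosSemidef.isSpectralDecomp {X : Matrix d d ℂ} (hX : X.PosSemidef) :
    IsSpectralDecomp X (hX.1.eigenvectorUnitary : Matrix d d ℂ) (eigs X) := by
  have he : eigs X = hX.1.eigenvalues := by simp [eigs, hX.1]
  refine ⟨?_, ?_, ?_, ?_⟩
  · exact Unitary.coe_star_mul_self hX.1.eigenvectorUnitary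
  · exact Unitary.coe_mul_star_self hX.1.eigenvectorUnitary
  · rw [he]
    exact hX.1.spectral_theorem
  · rw [he]
    exact hX.eigenvalues_nonneg

namespace IsSpectralDecomp

variable {ρ σ U V : Matrix d d ℂ} {r s : d → ℝ}

lemma conj_self (hρ : IsSpectralDecomp ρ U r) :
    Uᴴ * ρ * U = diagonal (fun i => (r i : ℂ)) := by
  rw [hρ.eq, Matrix.mul_assoc, Matrix.mul_assoc, Matrix.mul_assoc, hρ.isometry,
    Matrix.mul_one, ← Matrix.mul_assoc, hρ.isometry, Matrix.one_mul]

lemma re_trace (hρ : IsSpectralDecomp ρ U r) : ρ.trace.re = ∑ i, r i := by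
  rw [hρ.eq, Matrix.trace_mul_comm, ← Matrix.mul_assoc, hρ.isometry, Matrix.one_mul]
  simp [Matrix.trace]

lemma re_conj_apply (hρ : IsSpectralDecomp ρ U r) (V : Matrix d d ℂ) (k : d) :
    ((Vᴴ * ρ * V) k k).re = ∑ i, Complex.normSq ((Uᴴ * V) i k) * r i := by
  have : Vᴴ * ρ * V = (Uᴴ * V)ᴴ * diagonal (fun i => (r i : ℂ)) * (Uᴴ * V) := by
    rw [hρ.eq]
    simp [Matrix.mul_assoc]
  rw [this, Matrix.mul_apply, Complex.re_sum]
  refine Finset.sum_congr rfl fun i _ => ?_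
  rw [Matrix.mul_diagonal, conjTranspose_apply]
  simp [Complex.normSq_apply]
  ring

lemma sum_normSq_left (hρ : IsSpectralDecomp ρ U r) (hσ : IsSpectralDecomp σ V s) (k : d) :
    ∑ i, Complex.normSq ((Uᴴ * V) i k) = 1 := by
  have h : (Uᴴ * V)ᴴ * (Uᴴ * V) = 1 := by
    rw [conjTranspose_mul, conjTranspose_conjTranspose, Matrix.mul_assoc, ← Matrix.mul_assoc U,
      hρ.coisometry, Matrix.one_mul, hσ.isometry]
  have := congrArg Complex.re (congrFun (congrFun h k) k)
  rw [Matrix.mul_apply, Complex.re_sum] at this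
  simpa [Complex.normSq_apply] using this

lemma sum_normSq_right (hρ : IsSpectralDecomp ρ U r) (hσ : IsSpectralDecomp σ V s) (i : d) :
    ∑ k, Complex.normSq ((Uᴴ * V) i k) = 1 := by
  rw [← hσ.sum_normSq_left hρ i]
  refine Finset.sum_congr rfl fun k _ => ?_
  have : (Vᴴ * U) k i = star ((Uᴴ * V) i k) := by
    rw [← conjTranspose_apply, Matrix.conjTranspose_mul, conjTranspose_conjTranspose]
  rw [this, Complex.star_def, Complex.normSq_conj]

/-- If `ρ ≤ c σ`, eigenvectors of `ρ` for nonzero eigenvalues are orthogonal to the kernel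
of `σ`. -/
lemma overlap_eq_zero (hρ : IsSpectralDecomp ρ U r) (hσ : IsSpectralDecomp σ V s) {c : ℝ}
    (hc : ((c : ℂ) • σ - ρ).PosSemidef) {i k : d} (hk : s k = 0) (hi : r i ≠ 0) :
    (Uᴴ * V) i k = 0 := by
  have h := (hc.conjTranspose_mul_mul_same V).diag_nonneg (i := k)
  have h' : 0 ≤ ((Vᴴ * ((c : ℂ) • σ - ρ) * V) k k).re := (Complex.le_def.1 h).1
  rw [Matrix.mul_sub, Matrix.sub_mul, Matrix.sub_apply, Complex.sub_re, hρ.re_conj_apply,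
    Matrix.mul_smul, Matrix.smul_mul, hσ.conj_self] at h'
  simp [hk] at h'
  have h0 := (Finset.sum_eq_zero_iff_of_nonneg fun i _ =>
    mul_nonneg (Complex.normSq_nonneg _) (hρ.nonneg i)).1
    (le_antisymm h' (Finset.sum_nonneg fun i _ =>
      mul_nonneg (Complex.normSq_nonneg _) (hρ.nonneg i))) i (mem_univ i)
  simpa [hi] using h0

/-- The variational functional whose supremum over `Y` is the quadratic form of the inverse of
`Y ↦ (1 - t) Y σ + t ρ Y` at `ρ - σ`, in spectral coordinates. -/
lemma variational_eq_sum (hρ : IsSpectralDecomp ρ U r) (hσ : IsSpectralDecomp σ V s) (t : ℝ)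
    (y : Matrix d d ℂ) :
    2 * ((U * y * Vᴴ)ᴴ * (ρ - σ)).trace.re
        - ((1 - t) * ((U * y * Vᴴ)ᴴ * (U * y * Vᴴ) * σ).trace.re
          + t * ((U * y * Vᴴ) * (U * y * Vᴴ)ᴴ * ρ).trace.re) =
      ∑ i, ∑ k, (2 * (star (y i k) * (((r i - s k : ℝ) : ℂ) * (Uᴴ * V) i k)).re
        - ((1 - t) * s k + t * r i) * Complex.normSq (y i k)) := by
  have h1 : ((U * y * Vᴴ)ᴴ * (ρ - σ)).trace =
      (yᴴ * (diagonal (fun i => (r i : ℂ)) * (Uᴴ * V)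
        - (Uᴴ * V) * diagonal (fun i => (s i : ℂ)))).trace := by
    have : (U * y * Vᴴ)ᴴ * (ρ - σ) = V * (yᴴ * (Uᴴ * (ρ - σ))) := by
      simp [Matrix.mul_assoc]
    rw [this, Matrix.trace_mul_comm, Matrix.mul_assoc]
    congr 2
    rw [Matrix.mul_sub, Matrix.sub_mul]
    congr 1
    · rw [hρ.eq, ← Matrix.mul_assoc, ← Matrix.mul_assoc, hρ.isometry, Matrix.one_mul,
        Matrix.mul_assoc]
    · rw [hσ.eq]
      simp only [Matrix.mul_assoc]
      rw [hσ.isometry, Matrix.mul_one]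
  have h2 : ((U * y * Vᴴ)ᴴ * (U * y * Vᴴ) * σ).trace =
      (yᴴ * (y * diagonal (fun i => (s i : ℂ)))).trace := by
    have : (U * y * Vᴴ)ᴴ * (U * y * Vᴴ) * σ = V * (yᴴ * ((Uᴴ * U) * (y * (Vᴴ * σ)))) := by
      simp [Matrix.mul_assoc]
    rw [this, Matrix.trace_mul_comm, hρ.isometry, Matrix.one_mul, ← hσ.conj_self]
    simp [Matrix.mul_assoc]
  have h3 : ((U * y * Vᴴ) * (U * y * Vᴴ)ᴴ * ρ).trace =
      (yᴴ * (diagonal (fun i => (r i : ℂ)) * y)).trace := by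
    have : (U * y * Vᴴ) * (U * y * Vᴴ)ᴴ * ρ = U * (y * ((Vᴴ * V) * (yᴴ * (Uᴴ * ρ)))) := by
      simp [Matrix.mul_assoc]
    rw [this, Matrix.trace_mul_comm, hσ.isometry, Matrix.one_mul, ← hρ.conj_self,
      Matrix.mul_assoc, Matrix.trace_mul_comm]
    simp [Matrix.mul_assoc]
  rw [h1, h2, h3]
  simp only [Matrix.trace, Matrix.diag_apply, Matrix.mul_apply (M := yᴴ), Matrix.sub_apply,
    Matrix.mul_diagonal, Matrix.diagonal_mul, conjTranspose_apply, Complex.re_sum]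
  rw [Finset.sum_comm (f := fun i k => (2 * (star (y i k) * (((r i - s k : ℝ) : ℂ) *
    (Uᴴ * V) i k)).re - ((1 - t) * s k + t * r i) * Complex.normSq (y i k)))]
  simp only [Finset.mul_sum, ← Finset.sum_add_distrib, ← Finset.sum_sub_distrib]
  refine Finset.sum_congr rfl fun k _ => Finset.sum_congr rfl fun i _ => ?_
  simp [Complex.normSq_apply]
  ring

lemma variational_le (hρ : IsSpectralDecomp ρ U r) (hσ : IsSpectralDecomp σ V s) {t : ℝ}
    (ht : t ∈ Set.Ioo 0 1) (Y : Matrix d d ℂ) :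
    2 * (Yᴴ * (ρ - σ)).trace.re - ((1 - t) * (Yᴴ * Y * σ).trace.re + t * (Y * Yᴴ * ρ).trace.re) ≤
      ∑ i, ∑ k, Complex.normSq ((Uᴴ * V) i k) *
        ((r i - s k) ^ 2 / ((1 - t) * s k + t * r i)) := by
  have hY : Y = U * (Uᴴ * Y * V) * Vᴴ := by
    simp only [Matrix.mul_assoc, hσ.coisometry, Matrix.mul_one]
    rw [← Matrix.mul_assoc, hρ.coisometry, Matrix.one_mul]
  rw [hY, hρ.variational_eq_sum hσ]
  refine Finset.sum_le_sum fun i _ => Finset.sum_le_sum fun k _ => ?_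
  generalize (Uᴴ * Y * V) i k = z
  generalize (Uᴴ * V) i k = w
  obtain ⟨h0, h1⟩ := ht
  have hr := mul_nonneg h0.le (hρ.nonneg i)
  have hs := mul_nonneg (sub_nonneg.2 h1.le) (hσ.nonneg k)
  rcases (add_nonneg hs hr).eq_or_lt with hD | hD
  · have hr0 : r i = 0 := by
      have : t * r i = 0 := by linarith
      simpa [h0.ne'] using this
    have hs0 : s k = 0 := by
      have : (1 - t) * s k = 0 := by linarith
      simpa [(sub_pos.2 h1).ne'] using this
    simp [hr0, hs0]
  · rw [← mul_div_assoc, le_div_iff₀ hD]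
    generalize (1 - t) * s k + t * r i = D at hD
    generalize r i - s k = x
    simp [Complex.normSq_apply]
    nlinarith [sq_nonneg (D * z.re - x * w.re), sq_nonneg (D * z.im - x * w.im)]

lemma exists_variational_eq (hρ : IsSpectralDecomp ρ U r) (hσ : IsSpectralDecomp σ V s) (t : ℝ) :
    ∃ Y : Matrix d d ℂ,
      2 * (Yᴴ * (ρ - σ)).trace.re
          - ((1 - t) * (Yᴴ * Y * σ).trace.re + t * (Y * Yᴴ * ρ).trace.re) =
        ∑ i, ∑ k, Complex.normSq ((Uᴴ * V) i k) *
          ((r i - s k) ^ 2 / ((1 - t) * s k + t * r i)) := by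
  refine ⟨U * Matrix.of (fun i k =>
    (((r i - s k) / ((1 - t) * s k + t * r i) : ℝ) : ℂ) * (Uᴴ * V) i k) * Vᴴ, ?_⟩
  rw [hρ.variational_eq_sum hσ]
  refine Finset.sum_congr rfl fun i _ => Finset.sum_congr rfl fun k _ => ?_
  rw [Matrix.of_apply]
  generalize (Uᴴ * V) i k = w
  generalize (1 - t) * s k + t * r i = D
  generalize r i - s k = x
  rw [Complex.star_def, map_mul, Complex.conj_ofReal, Complex.normSq_mul, Complex.normSq_ofReal,
    show ((x / D : ℝ) : ℂ) * (starRingEnd ℂ) w * ((x : ℂ) * w) =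
      ((x / D * x * Complex.normSq w : ℝ) : ℂ) by
        push_cast [Complex.normSq_eq_conj_mul_self]; ring, Complex.ofReal_re]
  rcases eq_or_ne D 0 with rfl | hD
  · simp
  · field_simp
    ring

end IsSpectralDecomp

end

lemma trace_kronecker_one_mul {d e : Type} [Fintype d] [Fintype e] [DecidableEq e]
    (A : Matrix d d ℂ) (X : Matrix (d × e) (d × e) ℂ) :
    ((A ⊗ₖ (1 : Matrix e e ℂ)) * X).trace = (A * trB X).trace := by
  simp only [Matrix.trace, Matrix.diag_apply, Matrix.mul_apply, Fintype.sum_prod_type, trB,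
    Matrix.of_apply, kroneckerMap_apply, Matrix.one_apply, mul_ite, mul_one, mul_zero, ite_mul,
    zero_mul, Finset.sum_ite_eq, Finset.mem_univ, if_true, Finset.mul_sum]
  exact Finset.sum_congr rfl fun i _ => Finset.sum_comm

lemma trB_sub {d e : Type} [Fintype e]
    (X Y : Matrix (d × e) (d × e) ℂ) : trB (X - Y) = trB X - trB Y := by
  ext
  simp [trB]

lemma trB_smul {d e : Type} [Fintype e]
    (c : ℂ) (X : Matrix (d × e) (d × e) ℂ) : trB (c • X) = c • trB X := by
  ext
  simp [trB, Finset.mul_sum]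

lemma trB_sum {d e : Type} [Fintype e]
    {ι : Type} (J : Finset ι) (X : ι → Matrix (d × e) (d × e) ℂ) :
    trB (∑ j ∈ J, X j) = ∑ j ∈ J, trB (X j) := by
  ext
  simp only [trB, Matrix.of_apply, Matrix.sum_apply]
  exact Finset.sum_comm

lemma trA_sum {d e : Type} [Fintype d]
    {ι : Type} (J : Finset ι) (X : ι → Matrix (d × e) (d × e) ℂ) :
    trA (∑ j ∈ J, X j) = ∑ j ∈ J, trA (X j) := by
  ext
  simp only [trA, Matrix.of_apply, Matrix.sum_apply]
  exact Finset.sum_comm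

lemma trace_trB {d e : Type} [Fintype d] [Fintype e]
    (X : Matrix (d × e) (d × e) ℂ) : (trB X).trace = X.trace := by
  simp [trB, Matrix.trace, Fintype.sum_prod_type]

lemma trace_trA {d e : Type} [Fintype d] [Fintype e]
    (X : Matrix (d × e) (d × e) ℂ) : (trA X).trace = X.trace := by
  simp only [trA, Matrix.trace, Fintype.sum_prod_type, Matrix.diag_apply, Matrix.of_apply]
  exact Finset.sum_comm

lemma Matrix.PosSemidef.trB {d e : Type} [Fintype e]
    {X : Matrix (d × e) (d × e) ℂ} (hX : X.PosSemidef) :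
    (trB X).PosSemidef := by
  have : _root_.trB X = ∑ j, X.submatrix (fun i => (i, j)) (fun i => (i, j)) := by
    ext
    simp [_root_.trB, Matrix.sum_apply]
  rw [this]
  exact posSemidef_sum _ fun j _ => hX.submatrix _

lemma Matrix.PosSemidef.trA {d e : Type} [Fintype d]
    {X : Matrix (d × e) (d × e) ℂ} (hX : X.PosSemidef) :
    (trA X).PosSemidef := by
  have : _root_.trA X = ∑ j, X.submatrix (fun i => (j, i)) (fun i => (j, i)) := by
    ext
    simp [_root_.trA, Matrix.sum_apply]
  rw [this]
  exact posSemidef_sum _ fun j _ => hX.submatrix _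

lemma trA_kronecker_one_mul_comm {d e : Type} [Fintype d] [Fintype e] [DecidableEq e]
    (A : Matrix d d ℂ) (X : Matrix (d × e) (d × e) ℂ) :
    trA ((A ⊗ₖ (1 : Matrix e e ℂ)) * X) = trA (X * (A ⊗ₖ (1 : Matrix e e ℂ))) := by
  ext j j'
  simp only [trA, Matrix.of_apply, Matrix.mul_apply, Fintype.sum_prod_type, kroneckerMap_apply,
    Matrix.one_apply, mul_ite, mul_one, mul_zero, ite_mul, zero_mul, Finset.sum_ite_eq,
    Finset.sum_ite_eq', Finset.mem_univ, if_true]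
  rw [Finset.sum_comm]
  simp only [mul_comm]

open scoped MatrixOrder Matrix.Norms.L2Operator in
/-- `Tr_a ((P ⊗ I) ρ)` is positive semidefinite, being `Tr_a ((B ⊗ I) ρ (B ⊗ I)ᴴ)` for
`P = Bᴴ B`. -/
lemma posSemidef_trA_kronecker_mul {d e : Type} [Fintype d] [DecidableEq d] [Fintype e]
    [DecidableEq e] {P : Matrix d d ℂ} (hP : P.PosSemidef)
    {ρ : Matrix (d × e) (d × e) ℂ} (hρ : ρ.PosSemidef) :
    (trA ((P ⊗ₖ (1 : Matrix e e ℂ)) * ρ)).PosSemidef := by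
  obtain ⟨B, rfl⟩ := CStarAlgebra.nonneg_iff_eq_star_mul_self.mp hP.nonneg
  have : trA (((star B * B) ⊗ₖ (1 : Matrix e e ℂ)) * ρ) =
      trA ((B ⊗ₖ (1 : Matrix e e ℂ)) * ρ * (B ⊗ₖ (1 : Matrix e e ℂ))ᴴ) := by
    rw [conjTranspose_kronecker, conjTranspose_one, ← trA_kronecker_one_mul_comm,
      ← Matrix.mul_assoc, ← mul_kronecker_mul, Matrix.one_mul, star_eq_conjTranspose]
  rw [this]
  exact (hρ.mul_mul_conjTranspose_same _).trA

section

variable {d e : Type} [Fintype d] [DecidableEq d] [Fintype e] [DecidableEq e]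

/-- Monotonicity under partial trace of the quadratic forms representing relative entropy. -/
lemma sum_quadratic_trB_le {ρ σ U V : Matrix (d × e) (d × e) ℂ} {r s : d × e → ℝ}
    {U' V' : Matrix d d ℂ} {r' s' : d → ℝ}
    (hρ : IsSpectralDecomp ρ U r) (hσ : IsSpectralDecomp σ V s)
    (hρ' : IsSpectralDecomp (trB ρ) U' r') (hσ' : IsSpectralDecomp (trB σ) V' s')
    {t : ℝ} (ht : t ∈ Set.Ioo 0 1) :
    ∑ i, ∑ k, Complex.normSq ((U'ᴴ * V') i k) *
        ((r' i - s' k) ^ 2 / ((1 - t) * s' k + t * r' i)) ≤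
      ∑ i, ∑ k, Complex.normSq ((Uᴴ * V) i k) *
        ((r i - s k) ^ 2 / ((1 - t) * s k + t * r i)) := by
  obtain ⟨Y, hY⟩ := hρ'.exists_variational_eq hσ' t
  rw [← hY]
  refine le_of_eq_of_le ?_ (hρ.variational_le hσ ht (Y ⊗ₖ (1 : Matrix e e ℂ)))
  simp only [conjTranspose_kronecker, conjTranspose_one, ← mul_kronecker_mul, Matrix.one_mul,
    trace_kronecker_one_mul, trB_sub]

/-- The increment over `[0, 1]` of the weighted primitives is the relative entropy. -/
lemma IsSpectralDecomp.sum_relEntPrimitive {ρ σ U V : Matrix d d ℂ} {r s : d → ℝ}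
    (hρ : IsSpectralDecomp ρ U r) (hσ : IsSpectralDecomp σ V s) :
    ∑ i, ∑ k, Complex.normSq ((Uᴴ * V) i k) * relEntPrimitive (r i) (s k) 1 -
        ∑ i, ∑ k, Complex.normSq ((Uᴴ * V) i k) * relEntPrimitive (r i) (s k) 0 =
      -∑ i, Real.negMulLog (r i) - ∑ k, Real.log (s k) * ((Vᴴ * ρ * V) k k).re
        - ρ.trace.re + σ.trace.re := by
  have h1 : ∑ i, ∑ k, Complex.normSq ((Uᴴ * V) i k) * (-Real.negMulLog (r i) - r i) =
      -∑ i, Real.negMulLog (r i) - ρ.trace.re := by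
    simp_rw [← Finset.sum_mul, hρ.sum_normSq_right hσ, hρ.re_trace]
    simp
  have h2 : ∑ i, ∑ k, Complex.normSq ((Uᴴ * V) i k) * s k = σ.trace.re := by
    rw [Finset.sum_comm]
    simp_rw [← Finset.sum_mul, hρ.sum_normSq_left hσ, hσ.re_trace]
    simp
  have h3 : ∑ i, ∑ k, Complex.normSq ((Uᴴ * V) i k) * (r i * Real.log (s k)) =
      ∑ k, Real.log (s k) * ((Vᴴ * ρ * V) k k).re := by
    rw [Finset.sum_comm]
    simp_rw [hρ.re_conj_apply, Finset.mul_sum]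
    exact Finset.sum_congr rfl fun k _ => Finset.sum_congr rfl fun i _ => by ring
  rw [sub_right_comm, ← h1, ← h2, ← h3]
  simp only [← Finset.sum_add_distrib, ← Finset.sum_sub_distrib]
  refine Finset.sum_congr rfl fun i _ => Finset.sum_congr rfl fun k _ => ?_
  simp [relEntPrimitive, Real.negMulLog]
  ring

lemma IsSpectralDecomp.continuousOn_sum_relEntPrimitive {ρ σ U V : Matrix d d ℂ} {r s : d → ℝ}
    (hρ : IsSpectralDecomp ρ U r) (hσ : IsSpectralDecomp σ V s) {c : ℝ}
    (hc : ((c : ℂ) • σ - ρ).PosSemidef) :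
    ContinuousOn (fun t => ∑ i, ∑ k, Complex.normSq ((Uᴴ * V) i k) *
      relEntPrimitive (r i) (s k) t) (Set.Icc 0 1) := by
  refine continuousOn_finsetSum _ fun i _ => continuousOn_finsetSum _ fun k _ => ?_
  by_cases h : s k = 0 ∧ r i ≠ 0
  · simp only [hρ.overlap_eq_zero hσ hc h.1 h.2, map_zero, zero_mul]
    exact continuousOn_const
  · exact continuousOn_const.mul (continuousOn_relEntPrimitive (hρ.nonneg i) (hσ.nonneg k)
      fun h0 => by_contra fun h1 => h ⟨h0, h1⟩)

lemma IsSpectralDecomp.hasDerivAt_sum_relEntPrimitive {ρ σ U V : Matrix d d ℂ} {r s : d → ℝ}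
    (hρ : IsSpectralDecomp ρ U r) (hσ : IsSpectralDecomp σ V s) {t : ℝ}
    (ht : t ∈ Set.Ioo 0 1) :
    HasDerivAt (fun t => ∑ i, ∑ k, Complex.normSq ((Uᴴ * V) i k) *
        relEntPrimitive (r i) (s k) t)
      ((1 - t) * ∑ i, ∑ k, Complex.normSq ((Uᴴ * V) i k) *
        ((r i - s k) ^ 2 / ((1 - t) * s k + t * r i))) t := by
  have := HasDerivAt.fun_sum (u := univ) fun i _ => HasDerivAt.fun_sum (u := univ) fun k _ =>
    (hasDerivAt_relEntPrimitive (hρ.nonneg i) (hσ.nonneg k) ht).const_mul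
      (Complex.normSq ((Uᴴ * V) i k))
  refine this.congr_deriv ?_
  simp only [Finset.mul_sum]
  exact Finset.sum_congr rfl fun i _ => Finset.sum_congr rfl fun k _ => by ring

/-- Monotonicity of the relative entropy under partial trace. -/
lemma relEntropy_trB_le {ρ σ U V : Matrix (d × e) (d × e) ℂ} {r s : d × e → ℝ}
    {U' V' : Matrix d d ℂ} {r' s' : d → ℝ}
    (hρ : IsSpectralDecomp ρ U r) (hσ : IsSpectralDecomp σ V s)
    (hρ' : IsSpectralDecomp (trB ρ) U' r') (hσ' : IsSpectralDecomp (trB σ) V' s')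
    {c : ℝ} (hc : ((c : ℂ) • σ - ρ).PosSemidef) :
    -∑ i, Real.negMulLog (r' i) - ∑ k, Real.log (s' k) * ((V'ᴴ * trB ρ * V') k k).re ≤
      -∑ i, Real.negMulLog (r i) - ∑ k, Real.log (s k) * ((Vᴴ * ρ * V) k k).re := by
  have hc' : ((c : ℂ) • trB σ - trB ρ).PosSemidef := by
    rw [← trB_smul, ← trB_sub]
    exact hc.trB
  have hmono := monotoneOn_of_deriv_nonneg (convex_Icc (0 : ℝ) 1)
    ((hρ.continuousOn_sum_relEntPrimitive hσ hc).sub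
      (hρ'.continuousOn_sum_relEntPrimitive hσ' hc'))
    (fun t ht => by
      rw [interior_Icc] at ht
      exact ((hρ.hasDerivAt_sum_relEntPrimitive hσ ht).sub
        (hρ'.hasDerivAt_sum_relEntPrimitive hσ' ht)).differentiableAt.differentiableWithinAt)
    (fun t ht => by
      rw [interior_Icc] at ht
      rw [((hρ.hasDerivAt_sum_relEntPrimitive hσ ht).sub
        (hρ'.hasDerivAt_sum_relEntPrimitive hσ' ht)).deriv, ← mul_sub]
      exact mul_nonneg (sub_nonneg.2 ht.2.le)
        (sub_nonneg.2 (sum_quadratic_trB_le hρ hσ hρ' hσ' ht)))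
    (Set.left_mem_Icc.2 zero_le_one) (Set.right_mem_Icc.2 zero_le_one) zero_le_one
  have h1 := hρ.sum_relEntPrimitive hσ
  have h2 := hρ'.sum_relEntPrimitive hσ'
  simp only [Pi.sub_apply] at hmono
  rw [trace_trB, trace_trB] at h2
  linarith

/-- Concavity of the conditional entropy: Holevo's quantity decreases under partial trace. -/
lemma holevo_trB_le {ι : Type} (J : Finset ι) (p : ι → ℝ) (hp : ∀ j ∈ J, 0 < p j)
    (ρ : ι → Matrix (d × e) (d × e) ℂ) (hρ : ∀ j ∈ J, (ρ j).PosSemidef) :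
    vN (trB (∑ j ∈ J, (p j : ℂ) • ρ j)) - ∑ j ∈ J, p j * vN (trB (ρ j)) ≤
      vN (∑ j ∈ J, (p j : ℂ) • ρ j) - ∑ j ∈ J, p j * vN (ρ j) := by
  classical
  set σ := ∑ j ∈ J, (p j : ℂ) • ρ j with hσdef
  have hterm : ∀ j ∈ J, ((p j : ℂ) • ρ j).PosSemidef := fun j hj =>
    (hρ j hj).smul (by exact_mod_cast (hp j hj).le)
  have hσ : σ.PosSemidef := posSemidef_sum _ hterm
  have key : ∀ {f : Type} [Fintype f] [DecidableEq f] {τ V : Matrix f f ℂ} {s : f → ℝ}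
      (ω : ι → Matrix f f ℂ), IsSpectralDecomp τ V s → τ = ∑ j ∈ J, (p j : ℂ) • ω j →
      ∑ j ∈ J, p j * ∑ k, Real.log (s k) * ((Vᴴ * ω j * V) k k).re =
        -∑ k, Real.negMulLog (s k) := by
    intro f _ _ τ V s ω hτ hsum
    have hdiag : ∀ k, ∑ j ∈ J, p j * ((Vᴴ * ω j * V) k k).re = s k := by
      intro k
      have := congrArg Complex.re (congrFun (congrFun hτ.conj_self k) k)
      rw [hsum, Matrix.mul_sum, Matrix.sum_mul, Matrix.sum_apply, Complex.re_sum] at this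
      simpa using this
    simp_rw [Finset.mul_sum]
    rw [Finset.sum_comm, ← Finset.sum_neg_distrib]
    refine Finset.sum_congr rfl fun k _ => ?_
    rw [Real.negMulLog, neg_mul, neg_neg]
    conv_rhs => rw [← hdiag k, Finset.sum_mul, hdiag k]
    exact Finset.sum_congr rfl fun j _ => by ring
  have hmono : ∀ j ∈ J, p j * _ ≤ p j * _ := fun j hj =>
    mul_le_mul_of_nonneg_left (relEntropy_trB_le (c := (p j)⁻¹) (hρ j hj).isSpectralDecomp
      hσ.isSpectralDecomp (hρ j hj).trB.isSpectralDecomp hσ.trB.isSpectralDecomp (by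
        have hne : (p j : ℂ) ≠ 0 := by exact_mod_cast (hp j hj).ne'
        have : (((p j)⁻¹ : ℝ) : ℂ) • σ - ρ j =
            (((p j)⁻¹ : ℝ) : ℂ) • ∑ i ∈ J.erase j, (p i : ℂ) • ρ i := by
          rw [hσdef, ← Finset.add_sum_erase J _ hj, smul_add, smul_smul]
          simp [hne]
        rw [this]
        exact (posSemidef_sum _ fun i hi => hterm i (Finset.mem_of_mem_erase hi)).smul
          (by exact_mod_cast (inv_pos.2 (hp j hj)).le))) (hp j hj).le
  have hsum := Finset.sum_le_sum hmono
  simp only [mul_sub, mul_neg, Finset.sum_sub_distrib, Finset.sum_neg_distrib] at hsum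
  rw [key ρ hσ.isSpectralDecomp hσdef, key (fun j => trB (ρ j)) hσ.trB.isSpectralDecomp
    (by rw [hσdef, trB_sum]; simp only [trB_smul])] at hsum
  simp only [vN]
  linarith

end

/-- for the von Neumann entropy, `χ(P, b) ≤ χ(P, bc)` for any
tripartite state and any POVM. -/
theorem vN_holevo_monotone_discard
    (m n p k : ℕ)
    (ρ : Matrix (Fin m × (Fin n × Fin p)) (Fin m × (Fin n × Fin p)) ℂ)
    (hρ : IsDensity ρ) (P : Fin k → Matrix (Fin m) (Fin m) ℂ) (hP : IsPOVM P) :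
    vN (trB (trA ρ)) -
        ∑ j ∈ univ.filter (fun j => prob (P j) ρ ≠ 0),
          prob (P j) ρ * vN (trB (condB (P j) ρ)) ≤
      vN (trA ρ) -
        ∑ j ∈ univ.filter (fun j => prob (P j) ρ ≠ 0),
          prob (P j) ρ * vN (condB (P j) ρ) := by
  have hτ : ∀ j, (trA ((P j ⊗ₖ (1 : Matrix (Fin n × Fin p) (Fin n × Fin p) ℂ)) * ρ)).PosSemidef :=
    fun j => posSemidef_trA_kronecker_mul (hP.1 j) hρ.1
  have hnonneg : ∀ j, 0 ≤ prob (P j) ρ := fun j => by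
    have := (Complex.le_def.1 (hτ j).trace_nonneg).1
    rwa [trace_trA] at this
  have hsum : trA ρ =
      ∑ j ∈ univ.filter (fun j => prob (P j) ρ ≠ 0), (prob (P j) ρ : ℂ) • condB (P j) ρ := by
    rw [Finset.sum_filter]
    have : ∀ j, (if prob (P j) ρ ≠ 0 then (prob (P j) ρ : ℂ) • condB (P j) ρ else 0) =
        trA ((P j ⊗ₖ (1 : Matrix (Fin n × Fin p) (Fin n × Fin p) ℂ)) * ρ) := by
      intro j
      split_ifs with h
      · have h' : (prob (P j) ρ : ℂ) ≠ 0 := by exact_mod_cast h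
        simp [condB, smul_smul, h']
      · have him := (Complex.le_def.1 (hτ j).trace_nonneg).2
        symm
        rw [← (hτ j).trace_eq_zero_iff]
        refine Complex.ext ?_ him.symm
        rw [trace_trA]
        exact not_not.1 h
    rw [Finset.sum_congr rfl fun j _ => this j, ← trA_sum, ← Finset.sum_mul]
    have hk : ∑ j, P j ⊗ₖ (1 : Matrix (Fin n × Fin p) (Fin n × Fin p) ℂ) = 1 := by
      have : ∑ j, P j ⊗ₖ (1 : Matrix (Fin n × Fin p) (Fin n × Fin p) ℂ) = (∑ j, P j) ⊗ₖ 1 := by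
        ext
        simp [Matrix.sum_apply, Finset.sum_mul]
      rw [this, hP.2, one_kronecker_one]
    rw [hk, Matrix.one_mul]
  rw [hsum]
  refine holevo_trB_le _ _ (fun j hj => lt_of_le_of_ne (hnonneg j)
    (Finset.mem_filter.1 hj).2.symm) _ fun j _ => ?_
  exact (hτ j).smul (by exact_mod_cast inv_nonneg.2 (hnonneg j))
end
end

section
/- The von Neumann Holevo quantity is monotone under quantum channels: for every quantum channel 𝓔 given by Kraus operators, all probability weights p_j (p_j ≥ 0, ∑_j p_j = 1) and all density matrices ρ_j on ℂ^n (j ∈ Fin k), S(∑_j p_j 𝓔(ρ_j)) − ∑_j p_j S(𝓔(ρ_j)) ≤ S(∑_j p_j ρ_j) − ∑_j p_j S(ρ_j). -/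
open scoped Kronecker
open Finset Matrix
open scoped ComplexOrder

noncomputable section

/-- The dual (Heisenberg picture) action of the channel with Kraus operators `K`. -/
def dualChannel {n r t : ℕ} (K : Fin t → Matrix (Fin r) (Fin n) ℂ)
    (Z : Matrix (Fin r) (Fin r) ℂ) : Matrix (Fin n) (Fin n) ℂ :=
  ∑ i, (K i)ᴴ * Z * K i

lemma dualChannel_conjTranspose {n r t : ℕ} (K : Fin t → Matrix (Fin r) (Fin n) ℂ)
    (Z : Matrix (Fin r) (Fin r) ℂ) : dualChannel K Zᴴ = (dualChannel K Z)ᴴ := by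
  simp [dualChannel, conjTranspose_sum, Matrix.mul_assoc]

lemma trace_channel_mul {n r t : ℕ} (K : Fin t → Matrix (Fin r) (Fin n) ℂ)
    (ρ : Matrix (Fin n) (Fin n) ℂ) (Z : Matrix (Fin r) (Fin r) ℂ) :
    (channel K ρ * Z).trace = (ρ * dualChannel K Z).trace := by
  simp only [channel, dualChannel, Finset.sum_mul, Finset.mul_sum, trace_sum]
  refine Finset.sum_congr rfl fun i _ => ?_
  rw [Matrix.mul_assoc, Matrix.mul_assoc, Matrix.trace_mul_comm]
  simp only [Matrix.mul_assoc]

lemma trace_channel {n r t : ℕ} {K : Fin t → Matrix (Fin r) (Fin n) ℂ} (hK : IsKraus K)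
    (ρ : Matrix (Fin n) (Fin n) ℂ) : (channel K ρ).trace = ρ.trace := by
  have hdual : dualChannel K 1 = 1 := by simpa [dualChannel, IsKraus] using hK
  simpa [hdual] using trace_channel_mul K ρ 1

lemma channel_posSemidef {n r t : ℕ} (K : Fin t → Matrix (Fin r) (Fin n) ℂ)
    {ρ : Matrix (Fin n) (Fin n) ℂ} (hρ : ρ.PosSemidef) : (channel K ρ).PosSemidef :=
  posSemidef_sum _ fun i _ => hρ.mul_mul_conjTranspose_same (K i)

lemma channel_isDensity {n r t : ℕ} {K : Fin t → Matrix (Fin r) (Fin n) ℂ} (hK : IsKraus K)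
    {ρ : Matrix (Fin n) (Fin n) ℂ} (hρ : IsDensity ρ) : IsDensity (channel K ρ) :=
  ⟨channel_posSemidef K hρ.1, (trace_channel hK ρ).trans hρ.2⟩

lemma channel_sum_smul {n r t k : ℕ} (K : Fin t → Matrix (Fin r) (Fin n) ℂ)
    (c : Fin k → ℂ) (ρ : Fin k → Matrix (Fin n) (Fin n) ℂ) :
    channel K (∑ j, c j • ρ j) = ∑ j, c j • channel K (ρ j) := by
  simp only [channel, Matrix.mul_sum, Matrix.sum_mul, Finset.smul_sum, Matrix.mul_smul,
    Matrix.smul_mul]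
  exact Finset.sum_comm

/-- Kadison–Schwarz inequality for the dual channel, traced against a positive matrix. -/
lemma trace_dualChannel_mul_mul_le {n r t : ℕ} {K : Fin t → Matrix (Fin r) (Fin n) ℂ}
    (hK : IsKraus K) {σ : Matrix (Fin n) (Fin n) ℂ} (hσ : σ.PosSemidef)
    (Z : Matrix (Fin r) (Fin r) ℂ) :
    (dualChannel K Z * σ * (dualChannel K Z)ᴴ).trace.re ≤
      (Z * channel K σ * Zᴴ).trace.re := by
  set D := dualChannel K Z with hD
  have hpos : 0 ≤ ∑ i, ((Z * K i - K i * D) * σ * (Z * K i - K i * D)ᴴ).trace :=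
    Finset.sum_nonneg fun i _ => (hσ.mul_mul_conjTranspose_same _).trace_nonneg
  have h1 : ∑ i, (Z * K i * σ * (Z * K i)ᴴ).trace = (Z * channel K σ * Zᴴ).trace := by
    simp only [channel, Finset.mul_sum, Finset.sum_mul, trace_sum, conjTranspose_mul,
      Matrix.mul_assoc]
  have h2 : ∑ i, (Z * K i * σ * (K i * D)ᴴ).trace = (D * σ * Dᴴ).trace := by
    rw [hD, dualChannel, Finset.sum_mul, Finset.sum_mul, trace_sum, ← dualChannel, ← hD]
    refine Finset.sum_congr rfl fun i _ => ?_
    rw [conjTranspose_mul, ← Matrix.mul_assoc, Matrix.trace_mul_comm]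
    simp only [Matrix.mul_assoc]
  have h3 : ∑ i, (K i * D * σ * (Z * K i)ᴴ).trace = (D * σ * Dᴴ).trace := by
    have hDH : Dᴴ = ∑ i, (K i)ᴴ * Zᴴ * K i := by
      rw [hD, ← dualChannel_conjTranspose, dualChannel]
    rw [hDH, Finset.mul_sum, trace_sum]
    refine Finset.sum_congr rfl fun i _ => ?_
    rw [conjTranspose_mul, Matrix.mul_assoc, Matrix.mul_assoc, Matrix.trace_mul_comm]
    simp only [Matrix.mul_assoc]
  have h4 : ∑ i, (K i * D * σ * (K i * D)ᴴ).trace = (D * σ * Dᴴ).trace := by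
    have hone : ∑ i, (K i)ᴴ * K i = 1 := hK
    calc ∑ i, (K i * D * σ * (K i * D)ᴴ).trace
        = ∑ i, ((K i)ᴴ * K i * (D * σ * Dᴴ)).trace := by
          refine Finset.sum_congr rfl fun i _ => ?_
          rw [conjTranspose_mul, ← Matrix.mul_assoc, Matrix.trace_mul_comm]
          simp only [Matrix.mul_assoc]
      _ = (D * σ * Dᴴ).trace := by
          rw [← trace_sum, ← Finset.sum_mul, hone, Matrix.one_mul]
  simp only [conjTranspose_sub, Matrix.sub_mul, Matrix.mul_sub, trace_sub,
    Finset.sum_sub_distrib, h1, h2, h3, h4] at hpos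
  have := (Complex.le_def.mp hpos).1
  simp only [Complex.zero_re, Complex.sub_re] at this
  linarith

/-- The concave quadratic functional whose supremum over `Y` is the resolvent part at `s` of
the relative entropy of `ρ` with respect to `σ`. -/
def resolventForm {d : Type} [Fintype d] (s : ℝ) (ρ σ Y : Matrix d d ℂ) : ℝ :=
  2 * (ρ * Y).trace.re - (Yᴴ * σ * Y).trace.re - s * (Y * ρ * Yᴴ).trace.re

lemma resolventForm_channel_le {n r t : ℕ} {K : Fin t → Matrix (Fin r) (Fin n) ℂ}
    (hK : IsKraus K) {ρ σ : Matrix (Fin n) (Fin n) ℂ} (hρ : ρ.PosSemidef) (hσ : σ.PosSemidef)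
    {s : ℝ} (hs : 0 ≤ s) (Y : Matrix (Fin r) (Fin r) ℂ) :
    resolventForm s (channel K ρ) (channel K σ) Y ≤ resolventForm s ρ σ (dualChannel K Y) := by
  have h1 := trace_dualChannel_mul_mul_le hK hσ Yᴴ
  have h2 := mul_le_mul_of_nonneg_left (trace_dualChannel_mul_mul_le hK hρ Y) hs
  rw [dualChannel_conjTranspose, conjTranspose_conjTranspose, conjTranspose_conjTranspose] at h1
  unfold resolventForm
  rw [trace_channel_mul]
  linarith

/-- The supremum of `resolventForm` in terms of spectral data: `l` and `m` are the eigenvalues of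
`ρ` and `σ`, and `w` the squared overlaps of their eigenvectors. -/
def resolventSum {ι κ : Type} [Fintype ι] [Fintype κ] (w : ι → κ → ℝ) (m : ι → ℝ) (l : κ → ℝ)
    (s : ℝ) : ℝ :=
  ∑ i, ∑ j, w i j * (l j ^ 2 / (m i + s * l j))

/-- The classical relative entropy attached to spectral data. -/
def relEntSum {ι κ : Type} [Fintype ι] [Fintype κ] (w : ι → κ → ℝ) (m : ι → ℝ) (l : κ → ℝ) : ℝ :=
  ∑ i, ∑ j, w i j * l j * (Real.log (l j) - Real.log (m i))

/-- The integral of `resolventSum` over `[0, T]`. -/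
def truncRelEntSum {ι κ : Type} [Fintype ι] [Fintype κ] (w : ι → κ → ℝ) (m : ι → ℝ) (l : κ → ℝ)
    (T : ℝ) : ℝ :=
  ∑ i, ∑ j, w i j * l j * (Real.log (m i + T * l j) - Real.log (m i))

section ScalarIntegration

variable {ι κ : Type} [Fintype ι] [Fintype κ] {w : ι → κ → ℝ} {m : ι → ℝ} {l : κ → ℝ}

lemma hasDerivAt_truncRelEntSum (hm : ∀ i, 0 ≤ m i) (hl : ∀ j, 0 ≤ l j)
    (hsupp : ∀ i j, m i = 0 → w i j * l j = 0) {T : ℝ} (hT : 0 ≤ T) :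
    HasDerivAt (truncRelEntSum w m l) (resolventSum w m l T) T := by
  unfold truncRelEntSum resolventSum
  refine HasDerivAt.fun_sum fun i _ => HasDerivAt.fun_sum fun j _ => ?_
  rcases (hm i).eq_or_lt with hi | hi
  · have h0 := hsupp i j hi.symm
    have h1 : w i j * (l j ^ 2 / (m i + T * l j)) = 0 := by
      rw [← mul_div_assoc, sq, ← mul_assoc, h0]; simp
    simp only [h0, h1, zero_mul]
    exact hasDerivAt_const T 0
  · have hpos : 0 < m i + T * l j := add_pos_of_pos_of_nonneg hi (mul_nonneg hT (hl j))
    have hd : HasDerivAt (fun T => m i + T * l j) (l j) T := by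
      simpa using ((hasDerivAt_id T).mul_const (l j)).const_add (m i)
    have := ((hd.log hpos.ne').sub_const (Real.log (m i))).const_mul (w i j * l j)
    exact this.congr_deriv (by ring)

lemma tendsto_truncRelEntSum (hm : ∀ i, 0 ≤ m i) (hl : ∀ j, 0 ≤ l j) :
    Filter.Tendsto
      (fun T => truncRelEntSum w m l T - (∑ i, ∑ j, w i j * l j) * Real.log T)
      Filter.atTop (nhds (relEntSum w m l)) := by
  have heq : (fun T => truncRelEntSum w m l T - (∑ i, ∑ j, w i j * l j) * Real.log T) =
      fun T => ∑ i, ∑ j, w i j * l j *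
        (Real.log (m i + T * l j) - Real.log T - Real.log (m i)) := by
    funext T
    simp only [truncRelEntSum, Finset.sum_mul, ← Finset.sum_sub_distrib]
    refine Finset.sum_congr rfl fun i _ => Finset.sum_congr rfl fun j _ => ?_
    ring
  rw [heq]
  refine tendsto_finsetSum _ fun i _ => tendsto_finsetSum _ fun j _ => ?_
  rcases (hl j).eq_or_lt with hj | hj
  · simp [← hj]
  · refine Filter.Tendsto.const_mul _ (Filter.Tendsto.sub_const ?_ _)
    have hlim : Filter.Tendsto (fun T : ℝ => Real.log (m i * T⁻¹ + l j)) Filter.atTop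
        (nhds (Real.log (l j))) := by
      have h1 : Filter.Tendsto (fun T : ℝ => m i * T⁻¹ + l j) Filter.atTop (nhds (l j)) := by
        simpa using (tendsto_inv_atTop_zero.const_mul (m i)).add_const (l j)
      exact h1.log hj.ne'
    refine hlim.congr' ?_
    filter_upwards [Filter.eventually_gt_atTop 0] with T hT
    have hpos : 0 < m i + T * l j := add_pos_of_nonneg_of_pos (hm i) (mul_pos hT hj)
    rw [← Real.log_div hpos.ne' hT.ne']
    congr 1
    field_simp

lemma relEntSum_le_of_resolventSum_le {ι' κ' : Type} [Fintype ι'] [Fintype κ']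
    {w' : ι' → κ' → ℝ} {m' : ι' → ℝ} {l' : κ' → ℝ}
    (hm : ∀ i, 0 ≤ m i) (hl : ∀ j, 0 ≤ l j) (hsupp : ∀ i j, m i = 0 → w i j * l j = 0)
    (hm' : ∀ i, 0 ≤ m' i) (hl' : ∀ j, 0 ≤ l' j) (hsupp' : ∀ i j, m' i = 0 → w' i j * l' j = 0)
    (hsum : ∑ i, ∑ j, w' i j * l' j = ∑ i, ∑ j, w i j * l j)
    (hle : ∀ s, 0 < s → resolventSum w' m' l' s ≤ resolventSum w m l s) :
    relEntSum w' m' l' ≤ relEntSum w m l := by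
  have hmono : MonotoneOn (fun T => truncRelEntSum w m l T - truncRelEntSum w' m' l' T)
      (Set.Ici 0) := by
    have hderiv : ∀ T : ℝ, 0 ≤ T →
        HasDerivAt (fun T => truncRelEntSum w m l T - truncRelEntSum w' m' l' T)
          (resolventSum w m l T - resolventSum w' m' l' T) T := fun T hT =>
      (hasDerivAt_truncRelEntSum hm hl hsupp hT).sub
        (hasDerivAt_truncRelEntSum hm' hl' hsupp' hT)
    refine monotoneOn_of_deriv_nonneg (convex_Ici 0)
      (fun T hT => (hderiv T hT).continuousAt.continuousWithinAt) ?_ ?_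
    · intro T hT
      rw [interior_Ici] at hT
      exact (hderiv T (le_of_lt hT)).differentiableAt.differentiableWithinAt
    · intro T hT
      rw [interior_Ici] at hT
      rw [(hderiv T (le_of_lt hT)).deriv]
      exact sub_nonneg.mpr (hle T hT)
  refine le_of_tendsto_of_tendsto (tendsto_truncRelEntSum hm' hl') (tendsto_truncRelEntSum hm hl) ?_
  filter_upwards [Filter.eventually_ge_atTop 0] with T hT
  have := hmono (Set.mem_Ici.mpr le_rfl) (Set.mem_Ici.mpr hT) hT
  simp only [truncRelEntSum, zero_mul, add_zero, sub_self, mul_zero, Finset.sum_const_zero] at this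
  rw [hsum]
  simp only [truncRelEntSum]
  linarith

end ScalarIntegration

lemma eq_zero_of_add_mul_eq_zero {ι κ : Type} {m : ι → ℝ} {l : κ → ℝ} {s : ℝ}
    (hm : ∀ i, 0 ≤ m i) (hl : ∀ j, 0 ≤ l j) (hs : 0 < s) (i : ι) (j : κ)
    (h : m i + s * l j = 0) : l j = 0 := by
  have := (add_eq_zero_iff_of_nonneg (hm i) (mul_nonneg hs.le (hl j))).mp h
  exact (mul_eq_zero.mp this.2).resolve_left hs.ne'

lemma two_mul_re_sub_le {a c : ℝ} (h : c = 0 → a = 0) (hc : 0 ≤ c) (x z : ℂ) :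
    2 * a * (star x * z).re - c * Complex.normSq z ≤ Complex.normSq x * (a ^ 2 / c) := by
  rcases hc.eq_or_lt with h0 | hpos
  · simp [← h0, h h0.symm]
  · rw [← mul_div_assoc, le_div_iff₀ hpos]
    simp only [Complex.normSq_apply, Complex.star_def, Complex.mul_re, Complex.conj_re,
      Complex.conj_im]
    nlinarith [sq_nonneg (a * x.re - c * z.re), sq_nonneg (a * x.im - c * z.im)]

lemma two_mul_re_sub_eq (a c : ℝ) (x : ℂ) :
    2 * a * (star x * (((a / c : ℝ) : ℂ) * x)).re - c * Complex.normSq (((a / c : ℝ) : ℂ) * x) =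
      Complex.normSq x * (a ^ 2 / c) := by
  by_cases h0 : c = 0
  · simp [h0]
  · simp only [Complex.normSq_apply, Complex.star_def, Complex.mul_re, Complex.mul_im,
      Complex.conj_re, Complex.conj_im, Complex.ofReal_re, Complex.ofReal_im]
    field_simp
    ring

/-- The squared moduli of the entries of `Uᴴ * V`. -/
def overlap {d : Type} [Fintype d] (U V : Matrix d d ℂ) (i j : d) : ℝ :=
  Complex.normSq ((Uᴴ * V) i j)

lemma overlap_nonneg {d : Type} [Fintype d] (U V : Matrix d d ℂ) (i j : d) : 0 ≤ overlap U V i j :=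
  Complex.normSq_nonneg _

lemma posSemidef_sum_smul {d : Type} {k : ℕ} {p : Fin k → ℝ}
    {ρ : Fin k → Matrix d d ℂ} (hp : ∀ j, 0 ≤ p j) (hρ : ∀ j, (ρ j).PosSemidef) :
    (∑ j, (p j : ℂ) • ρ j).PosSemidef :=
  posSemidef_sum _ fun j _ => (hρ j).smul (Complex.zero_le_real.mpr (hp j))

section SpectralData

variable {d : Type} [Fintype d] [DecidableEq d]

lemma eigs_of_isHermitian {X : Matrix d d ℂ} (h : X.IsHermitian) : eigs X = h.eigenvalues :=
  dif_pos h

lemma exists_unitary_diagonal {X : Matrix d d ℂ} (h : X.IsHermitian) :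
    ∃ U : Matrix d d ℂ, Uᴴ * U = 1 ∧ U * Uᴴ = 1 ∧
      X = U * diagonal (fun i => (eigs X i : ℂ)) * Uᴴ := by
  refine ⟨h.eigenvectorUnitary, ?_, ?_, ?_⟩
  · exact Unitary.coe_star_mul_self h.eigenvectorUnitary
  · exact Unitary.coe_mul_star_self h.eigenvectorUnitary
  · rw [eigs_of_isHermitian h]
    exact h.spectral_theorem

lemma eigs_nonneg {X : Matrix d d ℂ} (h : X.PosSemidef) (i : d) : 0 ≤ eigs X i := by
  rw [eigs_of_isHermitian h.1]
  exact h.eigenvalues_nonneg i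

lemma diag_conj_eq_sum_overlap (U V : Matrix d d ℂ) (l : d → ℝ) (i : d) :
    ((Uᴴ * (V * diagonal (fun j => (l j : ℂ)) * Vᴴ) * U) i i).re =
      ∑ j, overlap U V i j * l j := by
  have h : Uᴴ * (V * diagonal (fun j => (l j : ℂ)) * Vᴴ) * U =
      (Uᴴ * V) * diagonal (fun j => (l j : ℂ)) * (Uᴴ * V)ᴴ := by
    simp [Matrix.mul_assoc]
  rw [h, Matrix.mul_apply, Complex.re_sum]
  refine Finset.sum_congr rfl fun j _ => ?_
  rw [mul_diagonal, conjTranspose_apply, overlap]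
  simp [Complex.normSq_apply]
  ring

lemma sum_overlap {U V : Matrix d d ℂ} (hU : U * Uᴴ = 1) (hV : Vᴴ * V = 1) (j : d) :
    ∑ i, overlap U V i j = 1 := by
  have h : (Uᴴ * V)ᴴ * (Uᴴ * V) = 1 := by
    rw [conjTranspose_mul, conjTranspose_conjTranspose, Matrix.mul_assoc, ← Matrix.mul_assoc U,
      hU, Matrix.one_mul, hV]
  have hjj := congrArg Complex.re (congrFun (congrFun h j) j)
  rw [Matrix.mul_apply, Complex.re_sum, one_apply_eq, Complex.one_re] at hjj
  rw [← hjj]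
  refine Finset.sum_congr rfl fun i _ => ?_
  simp [overlap, Complex.normSq_apply]

lemma sum_eigs_of_isDensity {X : Matrix d d ℂ} (hX : IsDensity X) : ∑ i, eigs X i = 1 := by
  have h := hX.1.1.trace_eq_sum_eigenvalues.symm.trans hX.2
  rw [← eigs_of_isHermitian hX.1.1] at h
  simpa using congrArg Complex.re h

lemma sum_overlap_mul_eigs {X U V : Matrix d d ℂ} (hX : IsDensity X) (hU : U * Uᴴ = 1)
    (hV : Vᴴ * V = 1) : ∑ i, ∑ j, overlap U V i j * eigs X j = 1 := by
  rw [Finset.sum_comm]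
  simp only [← Finset.sum_mul, sum_overlap hU hV, one_mul, sum_eigs_of_isDensity hX]

lemma resolventForm_spectral {U V : Matrix d d ℂ} (hU : Uᴴ * U = 1) (hV : Vᴴ * V = 1)
    (m l : d → ℝ) (s : ℝ) (Z : Matrix d d ℂ) :
    resolventForm s (V * diagonal (fun j => (l j : ℂ)) * Vᴴ)
        (U * diagonal (fun j => (m j : ℂ)) * Uᴴ) (U * Z * Vᴴ) =
      ∑ i, ∑ j, (2 * l j * (star ((Uᴴ * V) i j) * Z i j).re
        - (m i + s * l j) * Complex.normSq (Z i j)) := by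
  set L : Matrix d d ℂ := diagonal (fun j => (l j : ℂ)) with hL
  set M : Matrix d d ℂ := diagonal (fun j => (m j : ℂ)) with hM
  have h1 : (V * L * Vᴴ * (U * Z * Vᴴ)).trace = ((Uᴴ * V)ᴴ * Z * L).trace := by
    calc (V * L * Vᴴ * (U * Z * Vᴴ)).trace = (V * (L * Vᴴ * U * Z * Vᴴ)).trace := by
          simp only [Matrix.mul_assoc]
      _ = (L * Vᴴ * U * Z * (Vᴴ * V)).trace := by
          rw [Matrix.trace_mul_comm]; simp only [Matrix.mul_assoc]
      _ = (L * ((Uᴴ * V)ᴴ * Z)).trace := by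
          rw [hV]; simp [Matrix.mul_assoc]
      _ = _ := Matrix.trace_mul_comm _ _
  have h2 : ((U * Z * Vᴴ)ᴴ * (U * M * Uᴴ) * (U * Z * Vᴴ)).trace = (Zᴴ * (M * Z)).trace := by
    calc ((U * Z * Vᴴ)ᴴ * (U * M * Uᴴ) * (U * Z * Vᴴ)).trace
        = (V * (Zᴴ * (Uᴴ * U) * M * (Uᴴ * U) * Z * Vᴴ)).trace := by
          simp [Matrix.mul_assoc]
      _ = (Zᴴ * M * Z * (Vᴴ * V)).trace := by
          rw [hU, Matrix.trace_mul_comm]; simp [Matrix.mul_assoc]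
      _ = _ := by rw [hV]; simp [Matrix.mul_assoc]
  have h3 : ((U * Z * Vᴴ) * (V * L * Vᴴ) * (U * Z * Vᴴ)ᴴ).trace = (Z * L * Zᴴ).trace := by
    calc ((U * Z * Vᴴ) * (V * L * Vᴴ) * (U * Z * Vᴴ)ᴴ).trace
        = (U * (Z * (Vᴴ * V) * L * (Vᴴ * V) * Zᴴ * Uᴴ)).trace := by
          simp [Matrix.mul_assoc]
      _ = (Z * L * Zᴴ * (Uᴴ * U)).trace := by
          rw [hV, Matrix.trace_mul_comm]; simp [Matrix.mul_assoc]
      _ = _ := by rw [hU]; simp [Matrix.mul_assoc]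
  have e1 : ((Uᴴ * V)ᴴ * Z * L).trace.re =
      ∑ i, ∑ j, l j * (star ((Uᴴ * V) i j) * Z i j).re := by
    rw [Matrix.trace, Complex.re_sum, Finset.sum_comm]
    refine Finset.sum_congr rfl fun j _ => ?_
    rw [diag_apply, hL, mul_diagonal, Matrix.mul_apply, Finset.sum_mul, Complex.re_sum]
    refine Finset.sum_congr rfl fun i _ => ?_
    rw [conjTranspose_apply, Complex.re_mul_ofReal, mul_comm]
  have e2 : (Zᴴ * (M * Z)).trace.re = ∑ i, ∑ j, m i * Complex.normSq (Z i j) := by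
    rw [Matrix.trace, Complex.re_sum, Finset.sum_comm]
    refine Finset.sum_congr rfl fun j _ => ?_
    rw [diag_apply, Matrix.mul_apply, Complex.re_sum]
    refine Finset.sum_congr rfl fun i _ => ?_
    rw [conjTranspose_apply, hM, diagonal_mul]
    simp [Complex.normSq_apply]
    ring
  have e3 : (Z * L * Zᴴ).trace.re = ∑ i, ∑ j, l j * Complex.normSq (Z i j) := by
    rw [Matrix.trace, Complex.re_sum]
    refine Finset.sum_congr rfl fun i _ => ?_
    rw [diag_apply, Matrix.mul_apply, Complex.re_sum]
    refine Finset.sum_congr rfl fun j _ => ?_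
    rw [conjTranspose_apply, hL, mul_diagonal]
    simp [Complex.normSq_apply]
    ring
  rw [resolventForm, h1, h2, h3, e1, e2, e3]
  simp only [Finset.mul_sum, ← Finset.sum_sub_distrib]
  refine Finset.sum_congr rfl fun i _ => Finset.sum_congr rfl fun j _ => ?_
  ring

variable {U V : Matrix d d ℂ} {m l : d → ℝ} {s : ℝ}

lemma resolventForm_le_resolventSum (hU : Uᴴ * U = 1) (hU' : U * Uᴴ = 1) (hV : Vᴴ * V = 1)
    (hm : ∀ i, 0 ≤ m i) (hl : ∀ j, 0 ≤ l j) (hs : 0 < s) (Y : Matrix d d ℂ) :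
    resolventForm s (V * diagonal (fun j => (l j : ℂ)) * Vᴴ)
        (U * diagonal (fun j => (m j : ℂ)) * Uᴴ) Y ≤ resolventSum (overlap U V) m l s := by
  have hV' : V * Vᴴ = 1 := mul_eq_one_comm.mp hV
  have hY : Y = U * (Uᴴ * Y * V) * Vᴴ := by
    calc Y = (U * Uᴴ) * Y * (V * Vᴴ) := by rw [hU', hV']; simp
      _ = _ := by simp only [Matrix.mul_assoc]
  rw [hY, resolventForm_spectral hU hV]
  refine Finset.sum_le_sum fun i _ => Finset.sum_le_sum fun j _ => ?_
  exact two_mul_re_sub_le (eq_zero_of_add_mul_eq_zero hm hl hs i j)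
    (add_nonneg (hm i) (mul_nonneg hs.le (hl j))) _ _

lemma exists_resolventForm_eq_resolventSum (hU : Uᴴ * U = 1) (hV : Vᴴ * V = 1)
    (m l : d → ℝ) (s : ℝ) :
    ∃ Y, resolventForm s (V * diagonal (fun j => (l j : ℂ)) * Vᴴ)
        (U * diagonal (fun j => (m j : ℂ)) * Uᴴ) Y = resolventSum (overlap U V) m l s := by
  refine ⟨U * Matrix.of (fun i j => ((l j / (m i + s * l j) : ℝ) : ℂ) * (Uᴴ * V) i j) * Vᴴ, ?_⟩
  rw [resolventForm_spectral hU hV]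
  refine Finset.sum_congr rfl fun i _ => Finset.sum_congr rfl fun j _ => ?_
  exact two_mul_re_sub_eq _ _ _

section Ensemble

variable {k : ℕ} {p : Fin k → ℝ} {ρ : Fin k → Matrix d d ℂ} {V : Fin k → Matrix d d ℂ}

lemma sum_mul_sum_overlap (hU : Uᴴ * U = 1)
    (hσ : ∑ j, (p j : ℂ) • ρ j =
      U * diagonal (fun i => (eigs (∑ j, (p j : ℂ) • ρ j) i : ℂ)) * Uᴴ)
    (hρ : ∀ j, ρ j = V j * diagonal (fun i => (eigs (ρ j) i : ℂ)) * (V j)ᴴ) (i : d) :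
    ∑ j, p j * ∑ a, overlap U (V j) i a * eigs (ρ j) a = eigs (∑ j, (p j : ℂ) • ρ j) i := by
  have hdiag : Uᴴ * (∑ j, (p j : ℂ) • ρ j) * U =
      diagonal (fun i => (eigs (∑ j, (p j : ℂ) • ρ j) i : ℂ)) := by
    generalize eigs (∑ j, (p j : ℂ) • ρ j) = m at hσ ⊢
    rw [hσ]
    calc Uᴴ * (U * diagonal (fun i => (m i : ℂ)) * Uᴴ) * U
        = (Uᴴ * U) * diagonal (fun i => (m i : ℂ)) * (Uᴴ * U) := by simp only [Matrix.mul_assoc]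
      _ = _ := by rw [hU]; simp
  have hii := congrArg Complex.re (congrFun (congrFun hdiag i) i)
  rw [diagonal_apply_eq, Complex.ofReal_re] at hii
  rw [← hii]
  simp only [Matrix.mul_sum, Matrix.sum_mul, Matrix.mul_smul, Matrix.smul_mul, Matrix.sum_apply,
    Matrix.smul_apply, Complex.re_sum, smul_eq_mul, Complex.re_ofReal_mul]
  refine Finset.sum_congr rfl fun j _ => ?_
  rw [← diag_conj_eq_sum_overlap, ← hρ j]

lemma overlap_mul_eigs_eq_zero (hU : Uᴴ * U = 1)
    (hσ : ∑ j, (p j : ℂ) • ρ j =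
      U * diagonal (fun i => (eigs (∑ j, (p j : ℂ) • ρ j) i : ℂ)) * Uᴴ)
    (hρ : ∀ j, ρ j = V j * diagonal (fun i => (eigs (ρ j) i : ℂ)) * (V j)ᴴ)
    (hp : ∀ j, 0 ≤ p j) (hpos : ∀ j, (ρ j).PosSemidef) {j : Fin k} (hj : p j ≠ 0) (i a : d)
    (hi : eigs (∑ j, (p j : ℂ) • ρ j) i = 0) : overlap U (V j) i a * eigs (ρ j) a = 0 := by
  have hterm : ∀ j a, 0 ≤ overlap U (V j) i a * eigs (ρ j) a := fun j a =>
    mul_nonneg (overlap_nonneg _ _ _ _) (eigs_nonneg (hpos j) a)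
  have hsum := sum_mul_sum_overlap hU hσ hρ i
  rw [hi, Finset.sum_eq_zero_iff_of_nonneg fun j _ =>
    mul_nonneg (hp j) (Finset.sum_nonneg fun a _ => hterm j a)] at hsum
  have h0 := (mul_eq_zero.mp (hsum j (Finset.mem_univ j))).resolve_left hj
  exact (Finset.sum_eq_zero_iff_of_nonneg fun a _ => hterm j a).mp h0 a (Finset.mem_univ a)

lemma sum_mul_relEntSum (hU : Uᴴ * U = 1) (hU' : U * Uᴴ = 1) (hV : ∀ j, (V j)ᴴ * V j = 1)
    (hσ : ∑ j, (p j : ℂ) • ρ j =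
      U * diagonal (fun i => (eigs (∑ j, (p j : ℂ) • ρ j) i : ℂ)) * Uᴴ)
    (hρ : ∀ j, ρ j = V j * diagonal (fun i => (eigs (ρ j) i : ℂ)) * (V j)ᴴ) :
    ∑ j, p j * relEntSum (overlap U (V j)) (eigs (∑ j, (p j : ℂ) • ρ j)) (eigs (ρ j)) =
      vN (∑ j, (p j : ℂ) • ρ j) - ∑ j, p j * vN (ρ j) := by
  set σ := ∑ j, (p j : ℂ) • ρ j
  have hsum : ∀ i, ∑ j, p j * ∑ a, overlap U (V j) i a * eigs (ρ j) a = eigs σ i :=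
    sum_mul_sum_overlap hU hσ hρ
  have hsplit : ∀ j, relEntSum (overlap U (V j)) (eigs σ) (eigs (ρ j)) =
      -vN (ρ j) - ∑ i, (∑ a, overlap U (V j) i a * eigs (ρ j) a) * Real.log (eigs σ i) := by
    intro j
    have hent : -vN (ρ j) =
        ∑ i, ∑ a, overlap U (V j) i a * eigs (ρ j) a * Real.log (eigs (ρ j) a) := by
      rw [Finset.sum_comm, vN, ← Finset.sum_neg_distrib]
      refine Finset.sum_congr rfl fun a _ => ?_
      simp only [mul_assoc]
      rw [← Finset.sum_mul, sum_overlap hU' (hV j), Real.negMulLog]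
      ring
    simp only [hent, relEntSum, Finset.sum_mul, ← Finset.sum_sub_distrib, mul_sub]
  have hcross : ∑ j, p j * ∑ i, (∑ a, overlap U (V j) i a * eigs (ρ j) a) *
      Real.log (eigs σ i) = -vN σ := by
    rw [vN, ← Finset.sum_neg_distrib]
    simp only [Finset.mul_sum]
    rw [Finset.sum_comm]
    refine Finset.sum_congr rfl fun i _ => ?_
    rw [Real.negMulLog, neg_mul, neg_neg]
    nth_rewrite 2 [← hsum i]
    simp only [Finset.sum_mul, Finset.mul_sum, mul_assoc]
  simp only [hsplit, mul_sub, mul_neg, Finset.sum_sub_distrib, Finset.sum_neg_distrib, hcross]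
  ring

end Ensemble

end SpectralData

/-- the von Neumann Holevo quantity is monotone under quantum
channels. -/
theorem vN_holevo_monotone_channel
    (n r t k : ℕ) (K : Fin t → Matrix (Fin r) (Fin n) ℂ) (hK : IsKraus K)
    (p : Fin k → ℝ) (ρ : Fin k → Matrix (Fin n) (Fin n) ℂ)
    (hp : ∀ j, 0 ≤ p j) (hps : ∑ j, p j = 1) (hρ : ∀ j, IsDensity (ρ j)) :
    vN (∑ j, (p j : ℂ) • channel K (ρ j)) -
        ∑ j, p j * vN (channel K (ρ j)) ≤
      vN (∑ j, (p j : ℂ) • ρ j) - ∑ j, p j * vN (ρ j) := by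
  set τ := fun j => channel K (ρ j) with hτ
  have hτd : ∀ j, IsDensity (τ j) := fun j => channel_isDensity hK (hρ j)
  have hρmix := posSemidef_sum_smul hp fun j => (hρ j).1
  have hτmix := posSemidef_sum_smul hp fun j => (hτd j).1
  obtain ⟨U, hU, hU', hσ⟩ := exists_unitary_diagonal hρmix.1
  obtain ⟨U₁, hU₁, hU₁', hσ₁⟩ := exists_unitary_diagonal hτmix.1
  choose V hV _ hVρ using fun j => exists_unitary_diagonal (hρ j).1.1
  choose V₁ hV₁ _ hVτ using fun j => exists_unitary_diagonal (hτd j).1.1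
  have hkey : ∀ j,
      p j * relEntSum (overlap U₁ (V₁ j)) (eigs (∑ j, (p j : ℂ) • τ j)) (eigs (τ j)) ≤
      p j * relEntSum (overlap U (V j)) (eigs (∑ j, (p j : ℂ) • ρ j)) (eigs (ρ j)) := by
    intro j
    by_cases hj : p j = 0
    · simp [hj]
    refine mul_le_mul_of_nonneg_left ?_ (hp j)
    refine relEntSum_le_of_resolventSum_le (eigs_nonneg hρmix) (eigs_nonneg (hρ j).1)
      (overlap_mul_eigs_eq_zero hU hσ hVρ hp (fun j => (hρ j).1) hj)
      (eigs_nonneg hτmix) (eigs_nonneg (hτd j).1)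
      (overlap_mul_eigs_eq_zero hU₁ hσ₁ hVτ hp (fun j => (hτd j).1) hj)
      ((sum_overlap_mul_eigs (hτd j) hU₁' (hV₁ j)).trans
        (sum_overlap_mul_eigs (hρ j) hU' (hV j)).symm) fun s hs => ?_
    obtain ⟨Y, hY⟩ := exists_resolventForm_eq_resolventSum hU₁ (hV₁ j)
      (eigs (∑ j, (p j : ℂ) • τ j)) (eigs (τ j)) s
    rw [← hVτ j, ← hσ₁] at hY
    have hle := resolventForm_le_resolventSum hU hU' (hV j) (eigs_nonneg hρmix)
      (eigs_nonneg (hρ j).1) hs (dualChannel K Y)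
    rw [← hVρ j, ← hσ] at hle
    rw [← hY, hτ, ← channel_sum_smul]
    exact (resolventForm_channel_le hK (hρ j).1 hρmix hs.le Y).trans hle
  rw [← sum_mul_relEntSum hU hU' hV hσ hVρ, ← sum_mul_relEntSum hU₁ hU₁' hV₁ hσ₁ hVτ]
  exact Finset.sum_le_sum fun j _ => hkey j
end
end

section
/- The quadratic entropy S_Q is firmly subadditive: for every bipartite density matrix ρ on ℂ^m⊗ℂ^n and every POVM {P_j} on ℂ^m, χ_Q(P, b) ≤ S_Q(ρ_a) + S_Q(ρ_b) − S_Q(ρ), where χ_Q(P, b) = S_Q(ρ_b) − ∑_{j : p_j ≠ 0} p_j S_Q(ρ_{b|j}) with p_j = Tr((P_j ⊗ I) ρ) and ρ_{b|j} = (1/p_j)·Tr_a((P_j ⊗ I) ρ). -/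
open scoped Kronecker
open Finset Matrix
open scoped ComplexOrder

noncomputable section

open scoped MatrixOrder in
theorem PosSemidef.exists_eq_conjTranspose_mul_self {ι : Type*} [Fintype ι] [DecidableEq ι]
    {A : Matrix ι ι ℂ} (hA : A.PosSemidef) : ∃ B : Matrix ι ι ℂ, A = Bᴴ * B :=
  CStarAlgebra.nonneg_iff_eq_star_mul_self.mp hA.nonneg

section Frobenius

attribute [local instance] Matrix.frobeniusNormedAddCommGroup Matrix.frobeniusNormedSpace

variable {ι κ : Type*} [Fintype ι] [Fintype κ]

/-- The squared Frobenius norm is the sum of the squared moduli of the entries. -/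
theorem frobenius_norm_sq (A : Matrix ι κ ℂ) : ‖A‖ ^ 2 = ∑ i, ∑ j, ‖A i j‖ ^ 2 := by
  have h : 0 ≤ ∑ i, ∑ j, ‖A i j‖ ^ 2 := by positivity
  rw [frobenius_norm_def]
  simp only [Real.rpow_two]
  rw [← Real.sqrt_eq_rpow, Real.sq_sqrt h]

theorem frobenius_norm_sq_eq_trace (A : Matrix ι κ ℂ) : ‖A‖ ^ 2 = (trace (Aᴴ * A)).re := by
  rw [frobenius_norm_sq, sum_comm]
  simp only [trace, diag_apply, mul_apply, conjTranspose_apply, Complex.re_sum]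
  refine sum_congr rfl fun i _ => sum_congr rfl fun j _ => ?_
  rw [Complex.star_def, ← Complex.normSq_eq_conj_mul_self, Complex.ofReal_re,
    Complex.normSq_eq_norm_sq]

theorem trace_conjTranspose_mul_self_eq_norm_sq (A : Matrix ι κ ℂ) :
    trace (Aᴴ * A) = ((‖A‖ ^ 2 : ℝ) : ℂ) := by
  refine Complex.ext (by rw [Complex.ofReal_re, frobenius_norm_sq_eq_trace]) ?_
  have := congrArg Complex.im (trace_conjTranspose (Aᴴ * A))
  simp only [conjTranspose_mul, conjTranspose_conjTranspose, Complex.star_def,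
    Complex.conj_im] at this
  rw [Complex.ofReal_im]
  linarith

theorem trace_re_conjTranspose (A : Matrix ι ι ℂ) : (trace Aᴴ).re = (trace A).re := by
  rw [trace_conjTranspose, Complex.star_def, Complex.conj_re]

theorem trace_mul_self_re_le (Z : Matrix ι ι ℂ) : (trace (Z * Z)).re ≤ ‖Z‖ ^ 2 := by
  have h := sq_nonneg ‖Zᴴ - Z‖
  have h1 := frobenius_norm_sq_eq_trace Zᴴ
  have h2 := frobenius_norm_sq_eq_trace Z
  have h3 := trace_re_conjTranspose (Z * Z)
  rw [frobenius_norm_conjTranspose] at h1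
  rw [frobenius_norm_sq_eq_trace] at h
  simp only [conjTranspose_sub, conjTranspose_conjTranspose, conjTranspose_mul, sub_mul,
    mul_sub, trace_sub, Complex.sub_re] at h h1 h3
  linarith

/-- Positivity of the projection onto tensors antisymmetric in both pairs of indices. -/
theorem antisymmetrize_nonneg (v : ι → ι → κ → κ → ℂ) :
    0 ≤ (∑ i, ∑ j, ∑ a, ∑ b, star (v i j a b) *
      (v i j a b - v j i a b - v i j b a + v j i b a)).re := by
  set S : (ι → ι → κ → κ → ℂ) → ℂ := fun f => ∑ i, ∑ j, ∑ a, ∑ b, f i j a b with hS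
  have hr (f : ι → ι → κ → κ → ℂ) : S (fun i j a b => f j i a b) = S f := sum_comm
  have hc (f : ι → ι → κ → κ → ℂ) : S (fun i j a b => f i j b a) = S f :=
    sum_congr rfl fun i _ => sum_congr rfl fun j _ => sum_comm
  set w : ι → ι → κ → κ → ℂ := fun i j a b => v i j a b - v j i a b - v i j b a + v j i b a with hw
  set g : ι → ι → κ → κ → ℂ := fun i j a b => star (v i j a b) * w i j a b with hg
  have h4 : S (fun i j a b => star (w i j a b) * w i j a b) = 4 * S g := by
    have : S (fun i j a b => star (w i j a b) * w i j a b) =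
        S g + S (fun i j a b => g j i a b) + S (fun i j a b => g i j b a)
          + S (fun i j a b => g j i b a) := by
      simp only [hS, ← sum_add_distrib]
      refine sum_congr rfl fun i _ => sum_congr rfl fun j _ => sum_congr rfl fun a _ =>
        sum_congr rfl fun b _ => ?_
      simp only [hg, hw, star_sub, star_add]
      ring
    rw [this, hr, hc, hr (fun i j a b => g i j b a), hc]
    ring
  have h0 : 0 ≤ (S (fun i j a b => star (w i j a b) * w i j a b)).re := by
    simp only [hS, Complex.re_sum]
    refine sum_nonneg fun i _ => sum_nonneg fun j _ => sum_nonneg fun a _ =>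
      sum_nonneg fun b _ => ?_
    rw [Complex.star_def, ← Complex.normSq_eq_conj_mul_self, Complex.ofReal_re]
    exact Complex.normSq_nonneg _
  rw [h4, Complex.mul_re] at h0
  norm_num at h0
  exact h0

theorem norm_mul_sq_add_norm_mul_sq_le (X Y : Matrix ι κ ℂ) :
    ‖Xᴴ * Y‖ ^ 2 + ‖Y * Xᴴ‖ ^ 2 ≤ ‖X‖ ^ 2 * ‖Y‖ ^ 2 + ‖trace (Xᴴ * Y)‖ ^ 2 := by
  have h := antisymmetrize_nonneg fun i j a b => X i a * Y j b
  have e1 : ∑ i, ∑ j, ∑ a, ∑ b, star (X i a * Y j b) * (X i a * Y j b) =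
      trace (Xᴴ * X) * trace (Yᴴ * Y) := by
    rw [trace_mul_comm, trace_mul_comm Yᴴ]
    simp only [trace, diag_apply, mul_apply, conjTranspose_apply, sum_mul_sum, star_mul']
    refine sum_congr rfl fun i _ => sum_congr rfl fun j _ => sum_congr rfl fun a _ =>
      sum_congr rfl fun b _ => by ring
  have e2 : ∑ i, ∑ j, ∑ a, ∑ b, star (X i a * Y j b) * (X j a * Y i b) =
      trace ((Xᴴ * Y)ᴴ * (Xᴴ * Y)) := by
    simp only [trace, diag_apply, mul_apply, conjTranspose_apply, sum_mul_sum, star_mul', star_sum,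
      star_star]
    rw [sum_comm]
    simp_rw [sum_comm (s := (univ : Finset ι)) (t := (univ : Finset κ))]
    rw [sum_comm]
    refine sum_congr rfl fun b _ => sum_congr rfl fun a _ => sum_congr rfl fun j _ =>
      sum_congr rfl fun i _ => by ring
  have e3 : ∑ i, ∑ j, ∑ a, ∑ b, star (X i a * Y j b) * (X i b * Y j a) =
      trace ((Y * Xᴴ)ᴴ * (Y * Xᴴ)) := by
    simp only [trace, diag_apply, mul_apply, conjTranspose_apply, sum_mul_sum, star_mul', star_sum,
      star_star]
    refine sum_congr rfl fun i _ => sum_congr rfl fun j _ => ?_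
    rw [sum_comm]
    refine sum_congr rfl fun b _ => sum_congr rfl fun a _ => by ring
  have e4 : ∑ i, ∑ j, ∑ a, ∑ b, star (X i a * Y j b) * (X j b * Y i a) =
      trace (Xᴴ * Y) * star (trace (Xᴴ * Y)) := by
    rw [trace_mul_comm]
    simp only [trace, diag_apply, mul_apply, conjTranspose_apply, sum_mul_sum, star_mul', star_sum,
      star_star]
    refine sum_congr rfl fun i _ => sum_congr rfl fun j _ => sum_congr rfl fun a _ =>
      sum_congr rfl fun b _ => by ring
  simp only [mul_add, mul_sub, sum_add_distrib, sum_sub_distrib, e1, e2, e3, e4] at h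
  simp only [Complex.star_def, Complex.mul_conj, trace_conjTranspose_mul_self_eq_norm_sq,
    Complex.normSq_eq_norm_sq, ← Complex.ofReal_mul, ← Complex.ofReal_sub, ← Complex.ofReal_add,
    Complex.ofReal_re] at h
  linarith

theorem norm_sub_sq_add_two_mul_norm_trace_sq_le_of_im_eq_zero (M N : Matrix ι κ ℂ)
    (h : (trace (Nᴴ * M)).im = 0) :
    ‖Mᴴ * M - Nᴴ * N‖ ^ 2 + 2 * ‖trace (Nᴴ * M)‖ ^ 2 ≤ (‖M‖ ^ 2) ^ 2 + (‖N‖ ^ 2) ^ 2 := by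
  set Z := (M - N)ᴴ * (M + N) with hZ
  have hD : (2 : ℂ) • (Mᴴ * M - Nᴴ * N) = Zᴴ + Z := by
    simp only [hZ, conjTranspose_mul, conjTranspose_sub, conjTranspose_add,
      conjTranspose_conjTranspose, Matrix.mul_add, Matrix.sub_mul, two_smul]
    abel
  have hD' : 4 * ‖Mᴴ * M - Nᴴ * N‖ ^ 2 = ‖Zᴴ + Z‖ ^ 2 := by
    rw [← hD, norm_smul, mul_pow]
    norm_num
  have hexp : ‖Zᴴ + Z‖ ^ 2 = 2 * ‖Z‖ ^ 2 + 2 * (trace (Z * Z)).re := by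
    have h1 := frobenius_norm_sq_eq_trace Zᴴ
    have h2 := frobenius_norm_sq_eq_trace Z
    have h3 := trace_re_conjTranspose (Z * Z)
    rw [frobenius_norm_conjTranspose] at h1
    rw [frobenius_norm_sq_eq_trace (Zᴴ + Z)]
    simp only [conjTranspose_add, conjTranspose_conjTranspose, conjTranspose_mul, add_mul, mul_add,
      trace_add, Complex.add_re] at h1 h3 ⊢
    linarith
  have hcyc : trace (Z * Z) = trace ((M + N) * (M - N)ᴴ * ((M + N) * (M - N)ᴴ)) := by
    rw [hZ, Matrix.mul_assoc, trace_mul_comm]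
    simp only [Matrix.mul_assoc]
  have hle := trace_mul_self_re_le ((M + N) * (M - N)ᴴ)
  have hanti := norm_mul_sq_add_norm_mul_sq_le (M - N) (M + N)
  rw [← hcyc] at hle
  have hr : trace (Mᴴ * N) = trace (Nᴴ * M) := by
    rw [← Complex.conj_eq_iff_im.mpr h, ← Complex.star_def, ← trace_conjTranspose]
    simp
  have hM := frobenius_norm_sq_eq_trace M
  have hN := frobenius_norm_sq_eq_trace N
  have hX : ‖M - N‖ ^ 2 = ‖M‖ ^ 2 + ‖N‖ ^ 2 - 2 * (trace (Nᴴ * M)).re := by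
    rw [frobenius_norm_sq_eq_trace (M - N)]
    simp only [conjTranspose_sub, Matrix.sub_mul, Matrix.mul_sub, trace_sub, Complex.sub_re, hr]
    linarith
  have hY : ‖M + N‖ ^ 2 = ‖M‖ ^ 2 + ‖N‖ ^ 2 + 2 * (trace (Nᴴ * M)).re := by
    rw [frobenius_norm_sq_eq_trace (M + N)]
    simp only [conjTranspose_add, Matrix.add_mul, Matrix.mul_add, trace_add, Complex.add_re, hr]
    linarith
  have hXY : ‖trace ((M - N)ᴴ * (M + N))‖ ^ 2 = (‖M‖ ^ 2 - ‖N‖ ^ 2) ^ 2 := by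
    have : trace ((M - N)ᴴ * (M + N)) = ((‖M‖ ^ 2 - ‖N‖ ^ 2 : ℝ) : ℂ) := by
      simp only [conjTranspose_sub, Matrix.sub_mul, Matrix.mul_add, trace_sub, trace_add, hr,
        ← trace_conjTranspose_mul_self_eq_norm_sq, Complex.ofReal_sub]
      ring
    rw [this, Complex.norm_real, Real.norm_eq_abs, sq_abs]
  have hT : ‖trace (Nᴴ * M)‖ ^ 2 = (trace (Nᴴ * M)).re ^ 2 := by
    rw [← Complex.normSq_eq_norm_sq, Complex.normSq_apply, h]
    ring
  rw [hX, hY, hXY, ← hZ] at hanti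
  nlinarith

/-- For blocks `M Mᴴ`, `M Nᴴ`, `N Nᴴ` of a positive semidefinite matrix, the off-diagonal defect
is bounded by the mean of the diagonal ones. -/
theorem two_mul_norm_trace_sq_sub_norm_sq_le (M N : Matrix ι κ ℂ) :
    2 * (‖trace (M * Nᴴ)‖ ^ 2 - ‖M * Nᴴ‖ ^ 2) ≤
      ((‖M‖ ^ 2) ^ 2 - ‖M * Mᴴ‖ ^ 2) + ((‖N‖ ^ 2) ^ 2 - ‖N * Nᴴ‖ ^ 2) := by
  obtain ⟨u, hu, hphase⟩ := Complex.exists_norm_eq_mul_self (trace (Nᴴ * M))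
  have hreal : (u * trace (Nᴴ * M)).im = 0 := by rw [← hphase, Complex.ofReal_im]
  have hNM : trace (Nᴴ * (u • M)) = u * trace (Nᴴ * M) := by simp
  have huu : star u * u = 1 := by
    rw [Complex.star_def, ← Complex.normSq_eq_conj_mul_self, Complex.normSq_eq_norm_sq, hu]
    simp
  have hMM : (u • M)ᴴ * (u • M) = Mᴴ * M := by
    rw [conjTranspose_smul, Matrix.smul_mul, Matrix.mul_smul, smul_smul, huu, one_smul]
  have key := norm_sub_sq_add_two_mul_norm_trace_sq_le_of_im_eq_zero (u • M) N (by rwa [hNM])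
  rw [hNM, hMM, norm_smul, norm_mul, hu, one_mul, one_mul,
    frobenius_norm_sq_eq_trace (_ - _)] at key
  have h1 := frobenius_norm_sq_eq_trace (M * Mᴴ)
  have h2 := frobenius_norm_sq_eq_trace (N * Nᴴ)
  have h3 := frobenius_norm_sq_eq_trace (M * Nᴴ)
  have cyc (A B : Matrix ι κ ℂ) :
      trace (A * Bᴴ * (B * Aᴴ)) = trace (Aᴴ * A * (Bᴴ * B)) := by
    rw [← Matrix.mul_assoc, trace_mul_comm]
    simp only [Matrix.mul_assoc]
  simp only [conjTranspose_mul, conjTranspose_sub, conjTranspose_conjTranspose, sub_mul, mul_sub,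
    trace_sub, Complex.sub_re, cyc] at key h1 h2 h3
  rw [trace_mul_comm (Nᴴ * N) (Mᴴ * M)] at key h3
  rw [trace_mul_comm M Nᴴ]
  linarith

/-- Weighted form of `two_mul_norm_trace_sq_sub_norm_sq_le`, homogeneous in `M` and `N`. -/
theorem two_mul_norm_trace_sq_sub_norm_sq_le_weighted (M N : Matrix ι κ ℂ) :
    2 * (‖trace (M * Nᴴ)‖ ^ 2 - ‖M * Nᴴ‖ ^ 2) ≤
      ‖N‖ ^ 2 * (‖M‖ ^ 2 - ‖M * Mᴴ‖ ^ 2 / ‖M‖ ^ 2) +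
        ‖M‖ ^ 2 * (‖N‖ ^ 2 - ‖N * Nᴴ‖ ^ 2 / ‖N‖ ^ 2) := by
  rcases eq_or_ne M 0 with rfl | hM
  · simp
  rcases eq_or_ne N 0 with rfl | hN
  · simp
  have hM' : 0 < ‖M‖ := norm_pos_iff.mpr hM
  have hN' : 0 < ‖N‖ := norm_pos_iff.mpr hN
  have h := two_mul_norm_trace_sq_sub_norm_sq_le ((‖M‖⁻¹ : ℂ) • M) ((‖N‖⁻¹ : ℂ) • N)
  simp only [conjTranspose_smul, Matrix.smul_mul, Matrix.mul_smul, trace_smul, norm_smul,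
    smul_eq_mul, norm_mul, norm_star, norm_inv, Complex.norm_real, norm_norm, mul_pow, inv_pow] at h
  have h' := mul_le_mul_of_nonneg_left h (by positivity : 0 ≤ ‖M‖ ^ 2 * ‖N‖ ^ 2)
  refine le_trans (le_of_eq ?_) (h'.trans (le_of_eq ?_)) <;> field_simp

/-- Summed defect bound for the blocks `M x * (M y)ᴴ` of a positive semidefinite matrix of unit
trace. -/
theorem sum_norm_trace_sq_sub_norm_sq_le {X : Type*} [Fintype X] (M : X → Matrix ι κ ℂ)
    (hM : ∑ x, ‖M x‖ ^ 2 = 1) :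
    ∑ x, ∑ y, (‖trace (M x * (M y)ᴴ)‖ ^ 2 - ‖M x * (M y)ᴴ‖ ^ 2) ≤
      ∑ x, (‖M x‖ ^ 2 - ‖M x * (M x)ᴴ‖ ^ 2 / ‖M x‖ ^ 2) := by
  have h : ∑ x, ∑ y, 2 * (‖trace (M x * (M y)ᴴ)‖ ^ 2 - ‖M x * (M y)ᴴ‖ ^ 2) ≤ _ :=
    sum_le_sum fun x _ => sum_le_sum fun y _ =>
      two_mul_norm_trace_sq_sub_norm_sq_le_weighted (M x) (M y)
  simp only [sum_add_distrib, ← mul_sum, ← sum_mul, hM, one_mul] at h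
  linarith

/-- The conditional purity does not decrease when measurement outcomes are refined. -/
theorem norm_sum_mul_conjTranspose_sq_div_le {X : Type*} [Fintype X] (M : X → Matrix ι κ ℂ) :
    ‖∑ x, M x * (M x)ᴴ‖ ^ 2 / ∑ x, ‖M x‖ ^ 2 ≤ ∑ x, ‖M x * (M x)ᴴ‖ ^ 2 / ‖M x‖ ^ 2 := by
  refine div_le_of_le_mul₀ (by positivity) (by positivity) ?_
  calc ‖∑ x, M x * (M x)ᴴ‖ ^ 2 ≤ (∑ x, ‖M x * (M x)ᴴ‖) ^ 2 := by
        gcongr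
        exact norm_sum_le _ _
    _ ≤ _ := by
        refine sum_sq_le_sum_mul_sum_of_sq_le_mul _ (fun x _ => by positivity)
          (fun x _ => by positivity) fun x _ => ?_
        rcases eq_or_ne (M x) 0 with h | h
        · simp [h]
        · rw [div_mul_cancel₀ _ (pow_ne_zero 2 (norm_ne_zero_iff.mpr h))]

theorem norm_isometry_conj_sq [DecidableEq κ] (W : Matrix ι κ ℂ) (hW : Wᴴ * W = 1)
    (A : Matrix κ κ ℂ) : ‖W * A * Wᴴ‖ ^ 2 = ‖A‖ ^ 2 := by
  rw [frobenius_norm_sq_eq_trace, frobenius_norm_sq_eq_trace]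
  have : (W * A * Wᴴ)ᴴ * (W * A * Wᴴ) = W * (Aᴴ * (Wᴴ * W) * A * Wᴴ) := by
    simp only [conjTranspose_mul, conjTranspose_conjTranspose, Matrix.mul_assoc]
  rw [this, trace_mul_comm, hW, Matrix.mul_one, Matrix.mul_assoc, hW, Matrix.mul_one]

theorem SQ_eq_one_sub_norm_sq {d : Type} [Fintype d] {A : Matrix d d ℂ} (hA : A.IsHermitian) :
    SQ A = 1 - ‖A‖ ^ 2 := by
  rw [SQ, frobenius_norm_sq_eq_trace, hA.eq]

end Frobenius

section PartialTrace

variable {X da db : Type} [Fintype da] [Fintype db]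

theorem kronecker_one_conj_apply [DecidableEq db] (W : Matrix X da ℂ)
    (ρ : Matrix (da × db) (da × db) ℂ)
    (x y : X) (b b' : db) :
    ((W ⊗ₖ (1 : Matrix db db ℂ)) * ρ * (W ⊗ₖ (1 : Matrix db db ℂ))ᴴ) (x, b) (y, b') =
      ∑ i', (∑ i, W x i * ρ (i, b) (i', b')) * star (W y i') := by
  simp [mul_apply, Fintype.sum_prod_type, one_apply, apply_ite]

theorem trB_kronecker_one_conj [DecidableEq db] (W : Matrix X da ℂ)
    (ρ : Matrix (da × db) (da × db) ℂ) :
    trB ((W ⊗ₖ (1 : Matrix db db ℂ)) * ρ * (W ⊗ₖ (1 : Matrix db db ℂ))ᴴ) = W * trB ρ * Wᴴ := by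
  ext x y
  simp only [trB, of_apply, kronecker_one_conj_apply]
  simp only [mul_apply, conjTranspose_apply, of_apply]
  rw [sum_comm]
  refine sum_congr rfl fun i' _ => ?_
  rw [← sum_mul, sum_comm]
  simp only [mul_sum]

theorem trA_conjTranspose_mul_self_kronecker_one_mul [Fintype X] [DecidableEq db]
    (Q : Matrix X da ℂ)
    (ρ : Matrix (da × db) (da × db) ℂ) (b b' : db) :
    trA (((Qᴴ * Q) ⊗ₖ (1 : Matrix db db ℂ)) * ρ) b b' =
      ∑ s, ((Q ⊗ₖ (1 : Matrix db db ℂ)) * ρ * (Q ⊗ₖ (1 : Matrix db db ℂ))ᴴ) (s, b) (s, b') := by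
  simp only [kronecker_one_conj_apply]
  simp only [trA, of_apply, mul_apply, kroneckerMap_apply, Fintype.sum_prod_type, one_apply,
    mul_ite, mul_one, mul_zero, ite_mul, zero_mul, sum_ite_eq, mem_univ, if_true,
    conjTranspose_apply, sum_mul]
  rw [sum_comm (s := (univ : Finset X))]
  refine sum_congr rfl fun i _ => ?_
  rw [sum_comm]
  exact sum_congr rfl fun s _ => sum_congr rfl fun i' _ => by ring

theorem trace_trA_s14 (ρ : Matrix (da × db) (da × db) ℂ) : trace (trA ρ) = trace ρ := by
  simp only [trace, trA, diag_apply, of_apply, Fintype.sum_prod_type]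
  exact sum_comm

theorem trB_isHermitian {a b : Type} [Fintype b] {ρ : Matrix (a × b) (a × b) ℂ}
    (hρ : ρ.IsHermitian) :
    (trB ρ).IsHermitian := by
  ext i i'
  simp only [trB, conjTranspose_apply, of_apply, star_sum]
  exact sum_congr rfl fun j _ => hρ.apply _ _

end PartialTrace

attribute [local instance] Matrix.frobeniusNormedAddCommGroup Matrix.frobeniusNormedSpace

/-- the quadratic entropy is firmly subadditive. -/
theorem quadratic_firm_subadditivity
    (m n k : ℕ) (ρ : Matrix (Fin m × Fin n) (Fin m × Fin n) ℂ) (hρ : IsDensity ρ)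
    (P : Fin k → Matrix (Fin m) (Fin m) ℂ) (hP : IsPOVM P) :
    holevoB SQF P ρ ≤ SQ (trB ρ) + SQ (trA ρ) - SQ ρ := by
  obtain ⟨hpos, htr⟩ := hρ
  obtain ⟨R, hR⟩ := PosSemidef.exists_eq_conjTranspose_mul_self hpos
  choose Q hQ using fun j => PosSemidef.exists_eq_conjTranspose_mul_self (hP.1 j)
  set W : Matrix (Fin k × Fin m) (Fin m) ℂ := of fun x i => Q x.1 x.2 i with hWdef
  have hW : Wᴴ * W = 1 := by
    rw [← hP.2]
    ext i i'
    simp [hWdef, mul_apply, Matrix.sum_apply, hQ, Fintype.sum_prod_type]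
  have hV : (W ⊗ₖ (1 : Matrix (Fin n) (Fin n) ℂ))ᴴ * (W ⊗ₖ (1 : Matrix (Fin n) (Fin n) ℂ)) = 1 := by
    rw [conjTranspose_kronecker, ← mul_kronecker_mul, hW, conjTranspose_one, one_mul,
      one_kronecker_one]
  set T := (W ⊗ₖ (1 : Matrix (Fin n) (Fin n) ℂ)) * Rᴴ with hT
  set ρ' := (W ⊗ₖ (1 : Matrix (Fin n) (Fin n) ℂ)) * ρ * (W ⊗ₖ (1 : Matrix (Fin n) (Fin n) ℂ))ᴴ
    with hρ'
  have hTT : T * Tᴴ = ρ' := by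
    simp only [hT, hρ', hR, conjTranspose_mul, conjTranspose_conjTranspose, Matrix.mul_assoc]
  set M : Fin k × Fin m → Matrix (Fin n) (Fin m × Fin n) ℂ := fun x => of fun b e => T (x, b) e
    with hM
  have hblock (x y : Fin k × Fin m) (b b' : Fin n) : (M x * (M y)ᴴ) b b' = ρ' (x, b) (y, b') := by
    rw [← hTT]
    simp [hM, mul_apply]
  have hσ (j : Fin k) : trA ((P j ⊗ₖ (1 : Matrix (Fin n) (Fin n) ℂ)) * ρ) =
      ∑ s, M (j, s) * (M (j, s))ᴴ := by
    ext b b'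
    rw [hQ, trA_conjTranspose_mul_self_kronecker_one_mul, Matrix.sum_apply]
    refine sum_congr rfl fun s _ => ?_
    rw [hblock, hρ', kronecker_one_conj_apply, kronecker_one_conj_apply]
    rfl
  have hp (j : Fin k) : prob (P j) ρ = ∑ s, ‖M (j, s)‖ ^ 2 := by
    rw [prob, ← trace_trA_s14, hσ, trace_sum, Complex.re_sum]
    refine sum_congr rfl fun s _ => ?_
    rw [trace_mul_comm, ← frobenius_norm_sq_eq_trace]
  have hnorm : ∑ x, ‖M x‖ ^ 2 = 1 := by
    rw [Fintype.sum_prod_type]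
    simp only [← hp, prob, ← Complex.re_sum, ← trace_sum, ← Matrix.sum_mul]
    have hone : ∑ j, P j ⊗ₖ (1 : Matrix (Fin n) (Fin n) ℂ) = 1 := by
      rw [← one_kronecker_one, ← hP.2]
      ext ⟨i, b⟩ ⟨i', b'⟩
      simp [Matrix.sum_apply, sum_mul]
    rw [hone, Matrix.one_mul, htr, Complex.one_re]
  have hjoint : ∑ x, ∑ y, ‖M x * (M y)ᴴ‖ ^ 2 = ‖ρ‖ ^ 2 := by
    rw [← norm_isometry_conj_sq _ hV ρ, ← hρ', frobenius_norm_sq ρ']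
    simp only [frobenius_norm_sq, hblock, Fintype.sum_prod_type (α₁ := Fin k × Fin m)]
    exact sum_congr rfl fun x _ => sum_comm
  have hmarginal : ∑ x, ∑ y, ‖trace (M x * (M y)ᴴ)‖ ^ 2 = ‖trB ρ‖ ^ 2 := by
    rw [← norm_isometry_conj_sq _ hW, ← trB_kronecker_one_conj, frobenius_norm_sq]
    simp only [trace, diag_apply, hblock, trB, of_apply, hρ']
  have hcond (j : Fin k) : prob (P j) ρ * SQ (condB (P j) ρ) =
      ∑ s, ‖M (j, s)‖ ^ 2 -
        ‖∑ s, M (j, s) * (M (j, s))ᴴ‖ ^ 2 / ∑ s, ‖M (j, s)‖ ^ 2 := by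
    have hherm : (condB (P j) ρ).IsHermitian := by
      rw [condB, hσ, IsHermitian, conjTranspose_smul, conjTranspose_sum]
      simp
    rw [SQ_eq_one_sub_norm_sq hherm, condB, hσ, norm_smul, Complex.norm_real, mul_pow,
      Real.norm_eq_abs, sq_abs, hp]
    rcases eq_or_ne (∑ s, ‖M (j, s)‖ ^ 2) 0 with h | h
    · simp [h]
    · field_simp
  have hsum : ∑ j with prob (P j) ρ ≠ 0, prob (P j) ρ * SQ (condB (P j) ρ) =
      ∑ j, prob (P j) ρ * SQ (condB (P j) ρ) :=
    sum_filter_of_ne fun j _ h => left_ne_zero_of_mul h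
  have hcoarse : ∑ x, (‖M x‖ ^ 2 - ‖M x * (M x)ᴴ‖ ^ 2 / ‖M x‖ ^ 2) ≤
      ∑ j, prob (P j) ρ * SQ (condB (P j) ρ) := by
    rw [Fintype.sum_prod_type]
    refine sum_le_sum fun j _ => ?_
    rw [hcond, sum_sub_distrib]
    exact sub_le_sub_left (norm_sum_mul_conjTranspose_sq_div_le fun s => M (j, s)) _
  have hmain := sum_norm_trace_sq_sub_norm_sq_le M hnorm
  simp only [sum_sub_distrib, hjoint, hmarginal] at hmain hcoarse
  simp only [holevoB, SQF]
  rw [hsum, SQ_eq_one_sub_norm_sq (trB_isHermitian hpos.isHermitian),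
    SQ_eq_one_sub_norm_sq hpos.isHermitian]
  linarith
end
end
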